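/- arXiv:2407.13984 — 3 statements merged into one kernel-verified Lean document; each statement's English description precedes it below -/
import Mathlib

section
/- There is a constant C = C(n) > 0 depending only on n such that: (i) φ'(x) ≥ C⁻¹·‖x‖ for all x ∈ [0,d] with ‖x‖ ∈ [0, 10^{−n}]; (ii) any zero x₀ of φ (i.e., φ(x₀) = 0) lies in [10^{−n}, d − 10^{−n}]; (iii) sup over x ∈ [0,d] of |φ(x)| ≤ C; (iv) 0 ≤ φ'(x) ≤ C·‖x‖ for all x ∈ [0,d]. -/
/-! The eigenvalue enters only through the bounds `2 ≤ μ₁(N) ≤ 25`; everything else follows from the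
flux identity `h φ' (x) = -μ₁(N) ∫₀ˣ h φ` together with two doubling-type inequalities for `h`.

Concavity of `h^{1/(m+1)}` says that `h(x)/(d-x)^{m+1}` is nondecreasing and `h(x)/x^{m+1}` is
nonincreasing. The first gives `h(t) ≤ 2^{m+1} h(x)` for `t ≤ x ≤ d/2`, so `φ ≥ -1` in the flux
identity yields `φ'(x) ≤ 25·2^{m+1} x` on the left half (`Profile.p_le`), and after integration
`φ(x) ≤ -1 + 25·2^m x²` (`Profile.phi_le`). Hence a zero in the left half is at distance at least
`10^{-(m+2)}` from `0`. On `[0, 10^{-(m+2)}]` one has `φ ≤ -1/2`, and the second monotonicity gives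
`∫₀ˣ h ≥ x h(x)/(m+2)`, which turns the flux identity into the lower bound for `φ'`
(`Profile.le_p`). Balancing `∫ h φ = 0` between `[0, a]` and `[a, d]` with
`a = min (10^{-(m+2)}) (d/2)` bounds `φ(d)` below by a constant depending only on `m`
(`Profile.one_le`).

The whole situation is invariant under `x ↦ d - x` followed by division of `-φ` by `φ(d)`
(`Profile.reflect`). Applying the same estimates to the reflected problem gives the statements on
the right half, and turns the lower bound for `φ(d)` into an upper bound for it. -/

open MeasureTheory Real Set

/-- The first nonzero Neumann eigenvalue `μ₁(N)` of the weighted interval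
`N = ([0,d], h dx)`, defined variationally via the weighted Rayleigh quotient. -/
noncomputable def mu1N (d : ℝ) (h : ℝ → ℝ) : ℝ :=
  sInf { r : ℝ | ∃ f : ℝ → ℝ, ContDiff ℝ 1 f ∧
    (∫ x in (0:ℝ)..d, h x * f x) = 0 ∧ (∫ x in (0:ℝ)..d, h x * (f x) ^ 2) ≠ 0 ∧
    r = (∫ x in (0:ℝ)..d, h x * (deriv f x) ^ 2) / (∫ x in (0:ℝ)..d, h x * (f x) ^ 2) }

/-- `φ ∈ C¹[0,d] ∩ C^∞(0,d)` solves the weighted Neumann ODE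
`-(hφ')' = μ₁(N) hφ` on `(0,d)` with `φ(0) = -1`, `φ'(0) = φ'(d) = 0`. -/
def IsNeumannODESol (d : ℝ) (h φ : ℝ → ℝ) : Prop :=
  ContDiffOn ℝ 1 φ (Icc 0 d) ∧ ContDiffOn ℝ (⊤ : ℕ∞) φ (Ioo 0 d) ∧
  (∀ x ∈ Ioo 0 d,
    HasDerivAt (fun t => h t * derivWithin φ (Icc 0 d) t)
      (-(mu1N d h * (h x * φ x))) x) ∧
  φ 0 = -1 ∧ derivWithin φ (Icc 0 d) 0 = 0 ∧ derivWithin φ (Icc 0 d) d = 0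

/-- The data used in the estimates: a weight `h` on `[0,d]` satisfying the two monotonicity
properties (with denominators cleared) that follow from concavity of `h^{1/(m+1)}`, and a
nondecreasing solution `φ` of `-(hφ')' = lam h φ` with Neumann conditions and `φ 0 = -1`. The function
`p` stands for `φ'` up to the endpoints. -/
structure Profile (m : ℕ) (lam d : ℝ) (h φ p : ℝ → ℝ) : Prop where
  lam_ge : 2 ≤ lam
  lam_le : lam ≤ 25
  d_pos : 0 < d
  d_le : d ≤ 2
  h_cont : ContinuousOn h (Icc 0 d)
  h_nonneg : ∀ x ∈ Icc 0 d, 0 ≤ h x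
  h_pos : ∀ x ∈ Ioo 0 d, 0 < h x
  right_mono : ∀ t x, 0 ≤ t → t ≤ x → x ≤ d → (d - x) ^ (m + 1) * h t ≤ (d - t) ^ (m + 1) * h x
  left_mono : ∀ t x, 0 ≤ t → t ≤ x → x ≤ d → t ^ (m + 1) * h x ≤ x ^ (m + 1) * h t
  phi_cont : ContinuousOn φ (Icc 0 d)
  phi_mono : MonotoneOn φ (Icc 0 d)
  phi_deriv : ∀ x ∈ Ioo 0 d, HasDerivAt φ (p x) x
  p_cont : ContinuousOn p (Icc 0 d)
  p_nonneg : ∀ x ∈ Icc 0 d, 0 ≤ p x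
  p_zero : p 0 = 0
  p_d : p d = 0
  ode : ∀ x ∈ Ioo 0 d, HasDerivAt (fun t => h t * p t) (-(lam * (h x * φ x))) x
  phi_zero : φ 0 = -1

namespace Profile

variable {m : ℕ} {lam d : ℝ} {h φ p : ℝ → ℝ}

lemma h_int (S : Profile m lam d h φ p) {a b : ℝ} (ha : 0 ≤ a) (hab : a ≤ b) (hb : b ≤ d) :
    IntervalIntegrable h volume a b :=
  (S.h_cont.mono (Icc_subset_Icc ha hb)).intervalIntegrable_of_Icc hab

lemma hphi_int (S : Profile m lam d h φ p) {a b : ℝ} (ha : 0 ≤ a) (hab : a ≤ b) (hb : b ≤ d) :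
    IntervalIntegrable (fun t => h t * φ t) volume a b :=
  ((S.h_cont.mul S.phi_cont).mono (Icc_subset_Icc ha hb)).intervalIntegrable_of_Icc hab

lemma neg_hphi_int (S : Profile m lam d h φ p) {a b : ℝ} (ha : 0 ≤ a) (hab : a ≤ b) (hb : b ≤ d) :
    IntervalIntegrable (fun t => -(h t * φ t)) volume a b :=
  (S.hphi_int ha hab hb).neg

/-- The flux identity, obtained by integrating the equation from `0` to `x`. -/
lemma flux (S : Profile m lam d h φ p) {x : ℝ} (hx0 : 0 ≤ x) (hxd : x ≤ d) :
    h x * p x = lam * ∫ t in (0:ℝ)..x, -(h t * φ t) := by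
  have key : ∫ t in (0:ℝ)..x, -(lam * (h t * φ t)) = h x * p x - h 0 * p 0 :=
    intervalIntegral.integral_eq_sub_of_hasDerivAt_of_le hx0
    ((S.h_cont.mul S.p_cont).mono (Icc_subset_Icc le_rfl hxd))
    (fun t ht => S.ode t ⟨ht.1, ht.2.trans_le hxd⟩)
    (((S.hphi_int le_rfl hx0 hxd).const_mul lam).neg)
  rw [S.p_zero, mul_zero, sub_zero] at key
  rw [← key, intervalIntegral.integral_neg, intervalIntegral.integral_neg,
    intervalIntegral.integral_const_mul]
  ring

lemma neg_one_le (S : Profile m lam d h φ p) {x : ℝ} (hx : x ∈ Icc 0 d) : -1 ≤ φ x := by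
  have := S.phi_mono (left_mem_Icc.2 S.d_pos.le) hx hx.1
  rwa [S.phi_zero] at this

lemma h_le_two_pow (S : Profile m lam d h φ p) {t x : ℝ} (ht : 0 ≤ t) (htx : t ≤ x)
    (hx : x ≤ d / 2) : h t ≤ 2 ^ (m + 1) * h x := by
  have hd := S.d_pos
  have h1 := S.right_mono t x ht htx (by linarith)
  have h2 : (d - t) ^ (m + 1) ≤ (2 * (d - x)) ^ (m + 1) :=
    pow_le_pow_left₀ (by linarith) (by linarith) _
  have hx0 := S.h_nonneg x ⟨by linarith, by linarith⟩
  have h3 : 0 < (d - x) ^ (m + 1) := pow_pos (by linarith) _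
  rw [mul_pow] at h2
  refine le_of_mul_le_mul_left ?_ h3
  calc _ ≤ _ := h1
    _ ≤ 2 ^ (m + 1) * (d - x) ^ (m + 1) * h x := by gcongr
    _ = _ := by ring

lemma p_le (S : Profile m lam d h φ p) {x : ℝ} (hx0 : 0 ≤ x) (hx : x ≤ d / 2) :
    p x ≤ 25 * 2 ^ (m + 1) * x := by
  have hd := S.d_pos
  rcases hx0.eq_or_lt with rfl | hx0'
  · simp [S.p_zero]
  have hxd : x ≤ d := by linarith
  have hh := S.h_pos x ⟨hx0', by linarith⟩
  have h1 : ∫ t in (0:ℝ)..x, -(h t * φ t) ≤ ∫ t in (0:ℝ)..x, 2 ^ (m + 1) * h x := by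
    refine intervalIntegral.integral_mono_on hx0 (S.neg_hphi_int le_rfl hx0 hxd) (by simp) ?_
    intro t ht
    have ht' : t ∈ Icc 0 d := ⟨ht.1, ht.2.trans hxd⟩
    have a1 := S.h_le_two_pow ht.1 ht.2 hx
    nlinarith [S.neg_one_le ht', S.h_nonneg t ht']
  rw [intervalIntegral.integral_const, smul_eq_mul, sub_zero] at h1
  have h2 := S.flux hx0 hxd
  have h4 : 0 ≤ x * (2 ^ (m + 1) * h x) := by positivity
  refine le_of_mul_le_mul_left ?_ hh
  calc h x * p x ≤ lam * (x * (2 ^ (m + 1) * h x)) := by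
        rw [h2]; exact mul_le_mul_of_nonneg_left h1 (by linarith [S.lam_ge])
    _ ≤ 25 * (x * (2 ^ (m + 1) * h x)) := mul_le_mul_of_nonneg_right S.lam_le h4
    _ = _ := by ring

lemma phi_le (S : Profile m lam d h φ p) {x : ℝ} (hx0 : 0 ≤ x) (hx : x ≤ d / 2) :
    φ x ≤ -1 + 25 * 2 ^ m * x ^ 2 := by
  have hd := S.d_pos
  have hder : ∀ t ∈ Ioo 0 (d / 2),
      HasDerivAt (fun t => φ t - 25 * 2 ^ m * t ^ 2) (p t - 25 * 2 ^ (m + 1) * t) t := by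
    intro t ht
    have := (S.phi_deriv t ⟨ht.1, by linarith [ht.2]⟩).sub
      (((hasDerivAt_id t).pow 2).const_mul (25 * 2 ^ m : ℝ))
    refine this.congr_deriv ?_
    simp only [id, Nat.cast_ofNat, mul_one]
    ring
  have hanti : AntitoneOn (fun t => φ t - 25 * 2 ^ m * t ^ 2) (Icc 0 (d / 2)) := by
    refine antitoneOn_of_deriv_nonpos (convex_Icc _ _) ?_ ?_ ?_
    · exact (S.phi_cont.mono (Icc_subset_Icc le_rfl (by linarith))).sub (by fun_prop)
    · intro t ht
      rw [interior_Icc] at ht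
      exact (hder t ht).differentiableAt.differentiableWithinAt
    · intro t ht
      rw [interior_Icc] at ht
      rw [(hder t ht).deriv]
      linarith [S.p_le ht.1.le ht.2.le]
  have := hanti (left_mem_Icc.2 (by linarith)) ⟨hx0, hx⟩ hx0
  simp only [S.phi_zero] at this
  linarith

/-- The numerical reason why the radius `10^{-(m+2)}` is small enough. -/
lemma radius_bound {m : ℕ} {x : ℝ} (hx0 : 0 ≤ x) (hx : x ≤ 1 / 10 ^ (m + 2)) :
    25 * 2 ^ m * x ^ 2 ≤ 1 / 2 := by
  have h1 : x ^ 2 ≤ (1 / 10 ^ (m + 2)) ^ 2 := pow_le_pow_left₀ hx0 hx 2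
  have h2 : ((1:ℝ) / 10 ^ (m + 2)) ^ 2 = 1 / (10000 * 100 ^ m) := by
    rw [show (100:ℝ) = 10 ^ 2 by norm_num, ← pow_mul, div_pow, ← pow_mul, one_pow]
    congr 1
    rw [mul_comm 2 m, show (m + 2) * 2 = m * 2 + 4 by ring, pow_add]
    norm_num
    ring
  have h3 : (2:ℝ) ^ m ≤ 100 ^ m := pow_le_pow_left₀ (by norm_num) (by norm_num) m
  calc 25 * 2 ^ m * x ^ 2 ≤ 25 * 100 ^ m * (1 / (10000 * 100 ^ m)) := by
        rw [← h2]; gcongr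
    _ = 25 / 10000 := by field_simp
    _ ≤ 1 / 2 := by norm_num

lemma phi_le_neg_half (S : Profile m lam d h φ p) {x : ℝ} (hx0 : 0 ≤ x) (hx : x ≤ d / 2)
    (hxe : x ≤ 1 / 10 ^ (m + 2)) : φ x ≤ -(1 / 2) := by
  linarith [S.phi_le hx0 hx, radius_bound hx0 hxe]

/-- A zero in the left half keeps distance `10^{-(m+2)}` from `0`. -/
lemma le_zero (S : Profile m lam d h φ p) {x : ℝ} (hx0 : 0 ≤ x) (hx : x ≤ d / 2)
    (hz : φ x = 0) : 1 / 10 ^ (m + 2) ≤ x := by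
  by_contra! hlt
  linarith [S.phi_le_neg_half hx0 hx hlt.le]

lemma le_integral_h (S : Profile m lam d h φ p) {x : ℝ} (hx0 : 0 < x) (hx : x ≤ d) :
    x * h x / (m + 2) ≤ ∫ t in (0:ℝ)..x, h t := by
  have h1 : ∫ t in (0:ℝ)..x, h x / x ^ (m + 1) * t ^ (m + 1) ≤ ∫ t in (0:ℝ)..x, h t := by
    refine intervalIntegral.integral_mono_on hx0.le
      (Continuous.intervalIntegrable (by fun_prop) _ _) (S.h_int le_rfl hx0.le hx) ?_
    intro t ht
    have := S.left_mono t x ht.1 ht.2 hx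
    rw [div_mul_eq_mul_div, div_le_iff₀ (by positivity)]
    linarith
  rw [intervalIntegral.integral_const_mul, integral_pow] at h1
  refine le_trans (le_of_eq ?_) h1
  push_cast
  field_simp
  ring

lemma le_p (S : Profile m lam d h φ p) {x : ℝ} (hx0 : 0 ≤ x) (hx : x ≤ d / 2)
    (hxe : x ≤ 1 / 10 ^ (m + 2)) : x / (m + 2) ≤ p x := by
  have hd := S.d_pos
  rcases hx0.eq_or_lt with rfl | hx0'
  · simp [S.p_zero]
  have hxd : x ≤ d := by linarith
  have hh := S.h_pos x ⟨hx0', by linarith⟩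
  have h1 : ∫ t in (0:ℝ)..x, 1 / 2 * h t ≤ ∫ t in (0:ℝ)..x, -(h t * φ t) := by
    refine intervalIntegral.integral_mono_on hx0 ((S.h_int le_rfl hx0 hxd).const_mul _)
      (S.neg_hphi_int le_rfl hx0 hxd) ?_
    intro t ht
    have a1 := S.phi_le_neg_half ht.1 (ht.2.trans hx) (ht.2.trans hxe)
    nlinarith [S.h_nonneg t ⟨ht.1, ht.2.trans hxd⟩]
  rw [intervalIntegral.integral_const_mul] at h1
  have h2 := S.flux hx0 hxd
  have h3 := S.le_integral_h hx0' hxd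
  have h4 : 0 ≤ x * h x / (m + 2) := by positivity
  refine le_of_mul_le_mul_left ?_ hh
  calc h x * (x / (m + 2)) = x * h x / (m + 2) := by ring
    _ ≤ ∫ t in (0:ℝ)..x, h t := h3
    _ ≤ lam * ∫ t in (0:ℝ)..x, -(h t * φ t) := by nlinarith [S.lam_ge]
    _ = h x * p x := h2.symm

/-- The lower bound for `φ(d)`: the mass of `hφ⁻` on `[0,a]` has to be compensated on `[a,d]`,
where `φ ≤ φ(d)`, and the weights of these two intervals are comparable. -/
lemma one_le (S : Profile m lam d h φ p) :
    1 ≤ 2 * (m + 2) * (2 * 10 ^ (m + 2)) ^ (m + 2) * φ d := by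
  have hd := S.d_pos
  have hd2 := S.d_le
  set e : ℝ := 1 / 10 ^ (m + 2) with he
  have he0 : 0 < e := by positivity
  have he1 : e ≤ 1 := by
    rw [he, div_le_one (by positivity)]
    exact one_le_pow₀ (by norm_num)
  obtain ⟨a, ha⟩ : ∃ a, a = min e (d / 2) := ⟨_, rfl⟩
  have hae : a ≤ e := ha ▸ min_le_left _ _
  have had : a ≤ d / 2 := ha ▸ min_le_right _ _
  have ha0 : 0 < a := ha ▸ lt_min he0 (by linarith)
  have had' : a ≤ d := by linarith
  -- `d ≤ 2` is used here to bound the ratio `d / a`.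
  have hratio : d * e ≤ 2 * a := by
    rcases le_total e (d / 2) with hc | hc
    · rw [ha, min_eq_left hc]; nlinarith
    · rw [ha, min_eq_right hc]; nlinarith
  have hratio' : d / a ≤ 2 * 10 ^ (m + 2) := by
    rw [div_le_iff₀ ha0]
    rw [he] at hratio
    field_simp at hratio
    linarith
  have hh := S.h_pos a ⟨ha0, by linarith⟩
  have h0 : ∫ t in (0:ℝ)..d, -(h t * φ t) = 0 := by
    have := S.flux hd.le le_rfl
    rw [S.p_d, mul_zero] at this
    rcases mul_eq_zero.1 this.symm with h' | h'
    · linarith [S.lam_ge]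
    · exact h'
  rw [← intervalIntegral.integral_add_adjacent_intervals (S.neg_hphi_int le_rfl ha0.le had')
    (S.neg_hphi_int ha0.le had' le_rfl)] at h0
  have h1 : ∫ t in (0:ℝ)..a, 1 / 2 * h t ≤ ∫ t in (0:ℝ)..a, -(h t * φ t) := by
    refine intervalIntegral.integral_mono_on ha0.le ((S.h_int le_rfl ha0.le had').const_mul _)
      (S.neg_hphi_int le_rfl ha0.le had') ?_
    intro t ht
    have a1 := S.phi_le_neg_half ht.1 (ht.2.trans had) (ht.2.trans hae)
    nlinarith [S.h_nonneg t ⟨ht.1, ht.2.trans had'⟩]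
  have h2 : ∫ t in a..d, -φ d * h t ≤ ∫ t in a..d, -(h t * φ t) := by
    refine intervalIntegral.integral_mono_on had' ((S.h_int ha0.le had' le_rfl).const_mul _)
      (S.neg_hphi_int ha0.le had' le_rfl) ?_
    intro t ht
    have ht' : t ∈ Icc 0 d := ⟨ha0.le.trans ht.1, ht.2⟩
    nlinarith [S.h_nonneg t ht', S.phi_mono ht' (right_mem_Icc.2 hd.le) ht.2]
  have h3 : ∫ t in a..d, h t ≤ ∫ t in a..d, (d / a) ^ (m + 1) * h a := by
    refine intervalIntegral.integral_mono_on had' (S.h_int ha0.le had' le_rfl) (by simp) ?_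
    intro t ht
    have b1 := S.left_mono a t ha0.le ht.1 ht.2
    have b2 : t ^ (m + 1) ≤ d ^ (m + 1) :=
      pow_le_pow_left₀ (ha0.le.trans ht.1) ht.2 _
    rw [div_pow, div_mul_eq_mul_div, le_div_iff₀ (by positivity)]
    nlinarith
  have h3' : 0 ≤ ∫ t in a..d, h t :=
    intervalIntegral.integral_nonneg had' (fun t ht => S.h_nonneg t ⟨ha0.le.trans ht.1, ht.2⟩)
  have h4 := S.le_integral_h ha0 had'
  rw [intervalIntegral.integral_const_mul] at h1 h2
  rw [intervalIntegral.integral_const, smul_eq_mul] at h3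
  have h5 : 0 < a * h a / (m + 2) := by positivity
  have h6 : a * h a / (m + 2) ≤ 2 * (φ d * ∫ t in a..d, h t) := by linarith
  have hM : 0 ≤ φ d := by
    by_contra! hneg
    nlinarith
  have h7 : ∫ t in a..d, h t ≤ a * h a * (2 * 10 ^ (m + 2)) ^ (m + 2) := by
    calc _ ≤ _ := h3
      _ ≤ d * ((d / a) ^ (m + 1) * h a) := by gcongr; linarith
      _ = a * h a * (d / a) ^ (m + 2) := by rw [pow_succ (d / a) (m + 1)]; field_simp
      _ ≤ _ := by gcongr
  have h8 : a * h a / (m + 2) ≤ 2 * (φ d * (a * h a * (2 * 10 ^ (m + 2)) ^ (m + 2))) :=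
    h6.trans (by gcongr)
  have h9 : 0 < a * h a := by positivity
  rw [div_le_iff₀ (by positivity)] at h8
  refine le_of_mul_le_mul_left ?_ h9
  linarith

lemma phi_d_pos (S : Profile m lam d h φ p) : 0 < φ d := by
  by_contra! hneg
  have h1 := S.one_le
  have h2 : (0:ℝ) ≤ 2 * (m + 2) * (2 * 10 ^ (m + 2)) ^ (m + 2) := by positivity
  nlinarith

/-- Reflection at the midpoint, normalised so that the value at `0` is again `-1`. -/
lemma reflect (S : Profile m lam d h φ p) :
    Profile m lam d (fun x => h (d - x)) (fun x => -φ (d - x) / φ d)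
      (fun x => p (d - x) / φ d) := by
  have hM := S.phi_d_pos
  have hmaps : MapsTo (fun x => d - x) (Icc 0 d) (Icc 0 d) :=
    fun x hx => ⟨by linarith [hx.2], by linarith [hx.1]⟩
  have hmaps' : MapsTo (fun x => d - x) (Ioo 0 d) (Ioo 0 d) :=
    fun x hx => ⟨by linarith [hx.2], by linarith [hx.1]⟩
  have hc : ContinuousOn (fun x : ℝ => d - x) (Icc 0 d) := by fun_prop
  have hder : ∀ x : ℝ, HasDerivAt (fun x : ℝ => d - x) (-1) x := fun x => by
    simpa using (hasDerivAt_id x).const_sub d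
  refine ⟨S.lam_ge, S.lam_le, S.d_pos, S.d_le, S.h_cont.comp hc hmaps,
    fun x hx => S.h_nonneg _ (hmaps hx), fun x hx => S.h_pos _ (hmaps' hx), ?_, ?_,
    ((S.phi_cont.comp hc hmaps).neg).div_const _, ?_, ?_, (S.p_cont.comp hc hmaps).div_const _,
    fun x hx => div_nonneg (S.p_nonneg _ (hmaps hx)) hM.le, by simp [S.p_d], by simp [S.p_zero],
    ?_, ?_⟩
  · intro t x ht htx hx
    exact S.left_mono (d - x) (d - t) (by linarith) (by linarith) (by linarith)
  · intro t x ht htx hx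
    simpa using S.right_mono (d - x) (d - t) (by linarith) (by linarith) (by linarith)
  · intro x hx y hy hxy
    have := S.phi_mono (hmaps hy) (hmaps hx) (sub_le_sub_left hxy d)
    exact div_le_div_of_nonneg_right (neg_le_neg this) hM.le
  · intro x hx
    have := (((S.phi_deriv _ (hmaps' hx)).comp x (hder x)).neg).div_const (φ d)
    refine this.congr_deriv ?_
    simp only [mul_neg, mul_one, neg_neg]
  · intro x hx
    have := ((S.ode _ (hmaps' hx)).comp x (hder x)).div_const (φ d)
    have hfun : (fun t => h (d - t) * (p (d - t) / φ d)) =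
        fun t => ((fun t => h t * p t) ∘ fun t => d - t) t / φ d := by
      funext t
      simp [mul_div_assoc]
    rw [hfun]
    refine this.congr_deriv ?_
    ring
  · simp [hM.ne']

lemma zero_mem (S : Profile m lam d h φ p) {x : ℝ} (hx : x ∈ Icc 0 d) (hz : φ x = 0) :
    1 / 10 ^ (m + 2) ≤ x ∧ 1 / 10 ^ (m + 2) ≤ d - x := by
  rcases le_total x (d / 2) with hc | hc
  · have := S.le_zero hx.1 hc hz
    exact ⟨this, by linarith⟩
  · have := S.reflect.le_zero (x := d - x) (by linarith [hx.2]) (by linarith) (by simp [hz])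
    exact ⟨by linarith, this⟩

/-- The interval is at least twice as long as the radius appearing in the estimates. -/
lemma radius_le (S : Profile m lam d h φ p) : 1 / 10 ^ (m + 2) ≤ d / 2 := by
  obtain ⟨x, hx, hz⟩ := intermediate_value_Icc S.d_pos.le S.phi_cont
    (show (0:ℝ) ∈ Icc (φ 0) (φ d) from ⟨by rw [S.phi_zero]; norm_num, S.phi_d_pos.le⟩)
  have := S.zero_mem hx hz
  linarith

end Profile

/-- If `x` is the convex combination of `y` and `z` with weights proportional to `a` and `b`,
concavity of `h^{1/(m+1)}`, after dropping the nonnegative term at `z` and raising to the power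
`m + 1`, compares `h y` with `h x`. -/
lemma weight_ratio {m : ℕ} {d : ℝ} {h : ℝ → ℝ} (h0 : ∀ x ∈ Icc 0 d, 0 ≤ h x)
    (hc : ConcaveOn ℝ (Icc 0 d) (fun x => h x ^ ((1 : ℝ) / (m + 1))))
    {y z x a b : ℝ} (hy : y ∈ Icc 0 d) (hz : z ∈ Icc 0 d) (hx : x ∈ Icc 0 d)
    (ha : 0 ≤ a) (hb : 0 ≤ b) (hab : 0 < a + b) (hxe : a * y + b * z = (a + b) * x) :
    a ^ (m + 1) * h y ≤ (a + b) ^ (m + 1) * h x := by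
  have hpow : ∀ t ∈ Icc 0 d, (h t ^ ((1 : ℝ) / (m + 1))) ^ (m + 1) = h t := by
    intro t ht
    have := Real.rpow_inv_natCast_pow (h0 t ht) (Nat.succ_ne_zero m)
    simpa using this
  have h1 := hc.2 hy hz (div_nonneg ha hab.le) (div_nonneg hb hab.le)
    (by rw [← add_div, div_self hab.ne'])
  have h2 : (a / (a + b)) • y + (b / (a + b)) • z = x := by
    simp only [smul_eq_mul]
    field_simp
    linarith
  rw [h2] at h1
  simp only [smul_eq_mul] at h1
  have hz0 : 0 ≤ h z ^ ((1 : ℝ) / (m + 1)) := Real.rpow_nonneg (h0 z hz) _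
  have hy0 : 0 ≤ h y ^ ((1 : ℝ) / (m + 1)) := Real.rpow_nonneg (h0 y hy) _
  have h3 : a * h y ^ ((1 : ℝ) / (m + 1)) ≤ (a + b) * h x ^ ((1 : ℝ) / (m + 1)) := by
    have h4 : 0 ≤ b / (a + b) * h z ^ ((1 : ℝ) / (m + 1)) := by positivity
    have h5 : a / (a + b) * h y ^ ((1 : ℝ) / (m + 1)) ≤ h x ^ ((1 : ℝ) / (m + 1)) := by linarith
    rw [div_mul_eq_mul_div, div_le_iff₀ hab] at h5
    linarith
  have h6 := pow_le_pow_left₀ (by positivity) h3 (m + 1)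
  rwa [mul_pow, mul_pow, hpow y hy, hpow x hx] at h6

lemma profile_of_sol {m : ℕ} {d : ℝ} {h φ : ℝ → ℝ} (hd : 0 < d) (hd2 : d ≤ 2)
    (hcont : ContinuousOn h (Icc 0 d)) (h0 : ∀ x ∈ Icc 0 d, 0 ≤ h x)
    (hpos : ∀ x ∈ Ioo 0 d, 0 < h x)
    (hc : ConcaveOn ℝ (Icc 0 d) (fun x => h x ^ ((1 : ℝ) / (m + 1))))
    (hmu : π ^ 2 / 4 ≤ mu1N d h) (hmu' : mu1N d h ≤ 25) (hsol : IsNeumannODESol d h φ)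
    (hmono : MonotoneOn φ (Icc 0 d)) :
    Profile m (mu1N d h) d h φ (derivWithin φ (Icc 0 d)) := by
  obtain ⟨hC1, -, hode, hφ0, hp0, hpd⟩ := hsol
  refine ⟨by nlinarith [Real.pi_gt_three], hmu', hd, hd2, hcont, h0, hpos, ?_, ?_,
    hC1.continuousOn, hmono, ?_, hC1.continuousOn_derivWithin (uniqueDiffOn_Icc hd) le_rfl,
    fun x _ => hmono.derivWithin_nonneg, hp0, hpd, hode, hφ0⟩
  · intro t x ht htx hx
    rcases (htx.trans hx).eq_or_lt with htd | htd
    · obtain rfl : t = x := le_antisymm htx (htd ▸ hx)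
      rfl
    have := weight_ratio h0 hc (y := t) (z := d) (x := x) (a := d - x) (b := x - t)
      ⟨ht, htx.trans hx⟩ ⟨hd.le, le_rfl⟩ ⟨ht.trans htx, hx⟩ (by linarith) (by linarith)
      (by linarith) (by ring)
    simpa using this
  · intro t x ht htx hx
    rcases (ht.trans htx).eq_or_lt with hx0 | hx0
    · obtain rfl : t = x := le_antisymm htx (hx0 ▸ ht)
      rfl
    have := weight_ratio h0 hc (y := x) (z := 0) (x := t) (a := t) (b := x - t)
      ⟨ht.trans htx, hx⟩ ⟨le_rfl, hd.le⟩ ⟨ht, htx.trans hx⟩ (by linarith) (by linarith)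
      (by linarith) (by ring)
    simpa using this
  · intro x hx
    have hn : Icc 0 d ∈ nhds x := Icc_mem_nhds hx.1 hx.2
    exact ((hC1.differentiableOn one_ne_zero x
      (Ioo_subset_Icc_self hx)).hasDerivWithinAt).hasDerivAt hn

/-- Lemma 3.4: there is a constant `C = C(n) > 0` depending only on the dimension
`n = m + 2` such that, for the weight `h` of a convex domain (`h ≥ 0` continuous,
`h^{1/(n-1)}` concave on `[0,d]`, `h > 0` on `(0,d)`, `0 < d ≤ 2`,
`π²/4 ≤ μ₁(N) ≤ 25`) and `φ` the (nondecreasing) solution of `-(hφ')' = μ₁(N)hφ`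
with `φ(0) = -1`, `φ'(0) = φ'(d) = 0`:
(i) `φ'(x) ≥ C⁻¹‖x‖` whenever `‖x‖ ≤ 10^{-n}`;
(ii) every zero `x₀` of `φ` lies in `[10^{-n}, d - 10^{-n}]`;
(iii) `|φ| ≤ C` on `[0,d]`;
(iv) `0 ≤ φ'(x) ≤ C‖x‖` on `[0,d]`, where `‖x‖ := min{x, d-x}`. -/
theorem statement6 (m : ℕ) :
    ∃ C > (0 : ℝ), ∀ (d : ℝ) (h φ : ℝ → ℝ),
      0 < d → d ≤ 2 →
      ContinuousOn h (Icc 0 d) →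
      (∀ x ∈ Icc 0 d, 0 ≤ h x) →
      (∀ x ∈ Ioo 0 d, 0 < h x) →
      ConcaveOn ℝ (Icc 0 d) (fun x => h x ^ ((1 : ℝ) / (m + 1))) →
      π ^ 2 / 4 ≤ mu1N d h → mu1N d h ≤ 25 →
      IsNeumannODESol d h φ →
      MonotoneOn φ (Icc 0 d) →
      (∀ x ∈ Icc 0 d, min x (d - x) ≤ 1 / 10 ^ (m + 2) →
        C⁻¹ * min x (d - x) ≤ derivWithin φ (Icc 0 d) x) ∧
      (∀ x₀ ∈ Icc 0 d, φ x₀ = 0 →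
        x₀ ∈ Icc ((1 : ℝ) / 10 ^ (m + 2)) (d - 1 / 10 ^ (m + 2))) ∧
      (∀ x ∈ Icc 0 d, |φ x| ≤ C) ∧
      (∀ x ∈ Icc 0 d,
        0 ≤ derivWithin φ (Icc 0 d) x ∧
        derivWithin φ (Icc 0 d) x ≤ C * min x (d - x)) := by
  set K : ℝ := 2 * (m + 2) * (2 * 10 ^ (m + 2)) ^ (m + 2) with hK
  have hK1 : 1 ≤ K := by
    have h1 : (1:ℝ) ≤ 10 ^ (m + 2) := one_le_pow₀ (by norm_num)
    have h2 : (1:ℝ) ≤ (2 * 10 ^ (m + 2)) ^ (m + 2) := one_le_pow₀ (by linarith)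
    have h3 : (0:ℝ) ≤ m := Nat.cast_nonneg m
    nlinarith
  have hA1 : (1:ℝ) ≤ 25 * 2 ^ (m + 1) := by
    have : (1:ℝ) ≤ 2 ^ (m + 1) := one_le_pow₀ (by norm_num)
    linarith
  have hB1 : (1:ℝ) ≤ m + 2 := by
    have h3 : (0:ℝ) ≤ m := Nat.cast_nonneg m
    linarith
  obtain ⟨A, hA⟩ : ∃ A : ℝ, A = 25 * 2 ^ (m + 1) := ⟨_, rfl⟩
  obtain ⟨B, hB⟩ : ∃ B : ℝ, B = m + 2 := ⟨_, rfl⟩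
  rw [← hA] at hA1
  rw [← hB] at hB1
  have hABK : 1 ≤ A * B := one_le_mul_of_one_le_of_one_le hA1 hB1
  have hBK : 1 ≤ B * K := one_le_mul_of_one_le_of_one_le hB1 hK1
  have hC0 : 0 < A * B * K := by positivity
  have hCA : A * K ≤ A * B * K := by nlinarith [mul_pos (by linarith : 0 < A) (by linarith : 0 < K)]
  have hCB : B * K ≤ A * B * K := by nlinarith
  have hCK : K ≤ A * B * K := by nlinarith
  refine ⟨A * B * K, hC0, ?_⟩
  intro d h φ hd hd2 hcont h0 hpos hc hmu hmu' hsol hmono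
  have S := profile_of_sol hd hd2 hcont h0 hpos hc hmu hmu' hsol hmono
  have R := S.reflect
  have hM := S.phi_d_pos
  have hKM : 1 ≤ K * φ d := S.one_le
  -- Applied to the reflected solution, whose final value is `1 / φ d`, the lower bound becomes
  -- an upper bound.
  have hMK : φ d ≤ K := by
    have := R.one_le
    simp only [sub_self, S.phi_zero, neg_neg] at this
    rw [← hK, mul_one_div, le_div_iff₀ hM] at this
    linarith
  have hrad := S.radius_le
  refine ⟨?_, ?_, ?_, ?_⟩
  · intro x hx hxe
    rw [inv_mul_le_iff₀ hC0]
    rcases le_total x (d / 2) with hx2 | hx2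
    · rw [min_eq_left (by linarith)] at hxe ⊢
      have h1 := S.le_p hx.1 hx2 hxe
      rw [← hB, div_le_iff₀ (by linarith)] at h1
      have h2 : B * derivWithin φ (Icc 0 d) x ≤ A * B * K * derivWithin φ (Icc 0 d) x :=
        mul_le_mul_of_nonneg_right (by nlinarith) (S.p_nonneg x hx)
      linarith
    · rw [min_eq_right (by linarith)] at hxe ⊢
      have h1 := R.le_p (x := d - x) (by linarith [hx.2]) (by linarith) hxe
      simp only [sub_sub_cancel] at h1
      have h2 := S.p_nonneg x hx
      have h3 : d - x ≤ B * (K * derivWithin φ (Icc 0 d) x) := by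
        rw [← hB, div_le_iff₀ (by linarith)] at h1
        have h4 : derivWithin φ (Icc 0 d) x / φ d ≤ K * derivWithin φ (Icc 0 d) x := by
          rw [div_le_iff₀ hM]
          nlinarith
        nlinarith
      nlinarith
  · intro x hx hz
    have := S.zero_mem hx hz
    exact ⟨this.1, by linarith [this.2]⟩
  · intro x hx
    rw [abs_le]
    have h1 := S.neg_one_le hx
    have h2 := hmono hx (right_mem_Icc.2 hd.le) hx.2
    constructor <;> linarith
  · intro x hx
    refine ⟨S.p_nonneg x hx, ?_⟩
    rcases le_total x (d / 2) with hx2 | hx2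
    · rw [min_eq_left (by linarith)]
      have h1 := S.p_le hx.1 hx2
      rw [← hA] at h1
      exact h1.trans (mul_le_mul_of_nonneg_right (by nlinarith) hx.1)
    · rw [min_eq_right (by linarith)]
      have hdx : 0 ≤ d - x := by linarith [hx.2]
      have h1 := R.p_le (x := d - x) hdx (by linarith)
      simp only [sub_sub_cancel] at h1
      rw [← hA, div_le_iff₀ hM] at h1
      calc derivWithin φ (Icc 0 d) x ≤ A * (d - x) * φ d := h1
        _ ≤ A * (d - x) * K := by gcongr
        _ = A * K * (d - x) := by ring
        _ ≤ _ := mul_le_mul_of_nonneg_right hCA hdx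
end

section
/- Let d ∈ [1,2] and let h : [0,d] → [0,∞) be concave and positive on (0,d). Then there is a universal constant C > 0 such that ∫ over [0, 10⁻²] ∪ [d − 10⁻², d] of (h'(x))²/h(x) · ‖x‖² dx ≥ C · ∫₀^d (h'(x))²/h(x) · ‖x‖² dx, where h' denotes the (almost everywhere defined) derivative of h. -/
open MeasureTheory Real Set

/-!
Write `F x = h'(x)² / h(x) · ‖x‖²`. Tangent lines lie above the graph of `h`, which is
nonnegative at the endpoints; this gives `|h'(x)| ‖x‖ ≤ h(x)`, so `F ≤ h` is bounded and `F` is integrable on `[0, d]`.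

For the estimate, fix a point `x` of the middle interval with `p = h'(x) > 0`. By concavity, at
(almost) every `y < x` we have `h'(y) ≥ p` and `h(y) ≤ h(x)`, hence `F y ≥ p² y² / h(x)` on
`[0, 1/100]`. Since `‖x‖ ≤ 1`, also `F x ≤ p² / h(x)`, and integrating in `y` gives
`F x ≤ 3 · 10⁶ ∫_{[0, 1/100]} F` (`weightedFisher_le_left`). If `h'(x) < 0`, the reflection
`x ↦ d - x` gives the same bound with the right end interval, and `F x = 0` if `h'(x) = 0`.
Thus `F` is bounded on the middle interval by `3 · 10⁶` times its integral over the two ends, and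
integrating over a set of length at most `2` finishes the proof with `C = 1 / (1 + 6 · 10⁶)`.
-/

/-- The integrand `h'(x)² / h(x) · ‖x‖²`, where `‖x‖ = min x (d - x)`. -/
noncomputable def weightedFisher (d : ℝ) (h : ℝ → ℝ) (x : ℝ) : ℝ :=
  (deriv h x) ^ 2 / h x * (min x (d - x)) ^ 2

lemma weightedFisher_nonneg {d : ℝ} {h : ℝ → ℝ} (h0 : ∀ x ∈ Icc 0 d, 0 ≤ h x) {x : ℝ}
    (hx : x ∈ Icc 0 d) : 0 ≤ weightedFisher d h x := by
  have := h0 x hx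
  unfold weightedFisher
  positivity

lemma weightedFisher_reflect (d : ℝ) (h : ℝ → ℝ) (x : ℝ) :
    weightedFisher d (fun y => h (d - y)) x = weightedFisher d h (d - x) := by
  unfold weightedFisher
  rw [deriv_comp_const_sub, neg_sq, sub_sub_cancel, min_comm]

/-- The tangent line at `x` lies above the graph of `h`, in particular at the endpoints `0` and
`d`, where `h ≥ 0`. -/
lemma abs_deriv_mul_le {d : ℝ} {h : ℝ → ℝ} (h0 : ∀ x ∈ Icc 0 d, 0 ≤ h x)
    (hc : ConcaveOn ℝ (Icc 0 d) h) {x : ℝ} (hx : x ∈ Ioo 0 d) :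
    |deriv h x| * min x (d - x) ≤ h x := by
  obtain ⟨hx0, hxd⟩ := hx
  have hd : 0 < d := hx0.trans hxd
  have hxI : x ∈ Icc 0 d := ⟨hx0.le, hxd.le⟩
  by_cases hdiff : DifferentiableAt ℝ h x
  · have e1 := hc.deriv_le_slope ⟨le_rfl, hd.le⟩ hxI hx0 hdiff
    have e2 := hc.slope_le_deriv hxI ⟨hd.le, le_rfl⟩ hxd hdiff
    rw [slope_def_field, le_div_iff₀ (by linarith)] at e1
    rw [slope_def_field, div_le_iff₀ (by linarith)] at e2
    have a0 := h0 0 ⟨le_rfl, hd.le⟩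
    have ad := h0 d ⟨hd.le, le_rfl⟩
    rcases le_total 0 (deriv h x) with hp | hp
    · rw [abs_of_nonneg hp]
      have := mul_le_mul_of_nonneg_left (min_le_left x (d - x)) hp
      linarith
    · rw [abs_of_nonpos hp]
      have := mul_le_mul_of_nonneg_left (min_le_right x (d - x)) (neg_nonneg.2 hp)
      linarith
  · rw [deriv_zero_of_not_differentiableAt hdiff]
    simpa using h0 x hxI

lemma weightedFisher_le_self {d : ℝ} {h : ℝ → ℝ} (h0 : ∀ x ∈ Icc 0 d, 0 ≤ h x)
    (hpos : ∀ x ∈ Ioo 0 d, 0 < h x) (hc : ConcaveOn ℝ (Icc 0 d) h) {x : ℝ}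
    (hx : x ∈ Ioo 0 d) : weightedFisher d h x ≤ h x := by
  have k := abs_deriv_mul_le h0 hc hx
  have hp := hpos x hx
  have hm : 0 ≤ min x (d - x) := le_min hx.1.le (by linarith [hx.2])
  unfold weightedFisher
  rw [div_mul_eq_mul_div, div_le_iff₀ hp, ← sq_abs, ← mul_pow, ← sq]
  exact pow_le_pow_left₀ (by positivity) k 2

/-- A nonnegative concave function on `[0, d]` is at most twice its value at the midpoint. -/
lemma le_two_mul_midpoint {d : ℝ} {h : ℝ → ℝ} (h0 : ∀ x ∈ Icc 0 d, 0 ≤ h x)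
    (hc : ConcaveOn ℝ (Icc 0 d) h) {x : ℝ} (hx : x ∈ Icc 0 d) : h x ≤ 2 * h (d / 2) := by
  have hx' : d - x ∈ Icc 0 d := ⟨by linarith [hx.2], by linarith [hx.1]⟩
  have k := hc.2 hx hx' (by norm_num : (0 : ℝ) ≤ 1 / 2) (by norm_num : (0 : ℝ) ≤ 1 / 2)
    (by norm_num)
  have e : (1 / 2 : ℝ) • x + (1 / 2 : ℝ) • (d - x) = d / 2 := by
    simp only [smul_eq_mul]; ring
  rw [e] at k
  simp only [smul_eq_mul] at k
  linarith [h0 _ hx']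

lemma integrableOn_weightedFisher {d : ℝ} {h : ℝ → ℝ} (h0 : ∀ x ∈ Icc 0 d, 0 ≤ h x)
    (hpos : ∀ x ∈ Ioo 0 d, 0 < h x) (hc : ConcaveOn ℝ (Icc 0 d) h) :
    IntegrableOn (weightedFisher d h) (Icc 0 d) := by
  rw [integrableOn_Icc_iff_integrableOn_Ioo]
  have hcont : ContinuousOn h (Ioo 0 d) :=
    (hc.subset Ioo_subset_Icc_self (convex_Ioo _ _)).continuousOn isOpen_Ioo
  refine IntegrableOn.of_bound measure_Ioo_lt_top ?_ (2 * h (d / 2)) ?_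
  · have hm : AEMeasurable h (volume.restrict (Ioo 0 d)) := hcont.aemeasurable measurableSet_Ioo
    have hd : AEMeasurable (deriv h) (volume.restrict (Ioo 0 d)) :=
      (measurable_deriv h).aemeasurable
    exact (((hd.pow_const 2).div hm).mul
      (by fun_prop : AEMeasurable (fun x => (min x (d - x)) ^ 2) _)).aestronglyMeasurable
  · refine (ae_restrict_iff' measurableSet_Ioo).2 (ae_of_all _ fun x hx => ?_)
    have hxI := Ioo_subset_Icc_self hx
    rw [Real.norm_of_nonneg (weightedFisher_nonneg h0 hxI)]
    exact (weightedFisher_le_self h0 hpos hc hx).trans (le_two_mul_midpoint h0 hc hxI)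

/-- On the left of a point of positive derivative a concave function is increasing, so Lebesgue's
theorem on monotone functions gives differentiability almost everywhere there. -/
lemma ae_differentiableAt_left {d : ℝ} {h : ℝ → ℝ} (hc : ConcaveOn ℝ (Icc 0 d) h) {x : ℝ}
    (hx : x ∈ Ioo 0 d) (hp : 0 < deriv h x) :
    ∀ᵐ y, y ∈ Ioo 0 x → DifferentiableAt ℝ h y := by
  have hdiff := differentiableAt_of_deriv_ne_zero hp.ne'
  have hmono : MonotoneOn h (Ioo 0 x) := by
    intro y hy z hz hyz
    rcases hyz.eq_or_lt with rfl | hyz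
    · exact le_rfl
    have hyI : y ∈ Icc 0 d := ⟨hy.1.le, (hy.2.trans hx.2).le⟩
    have hzI : z ∈ Icc 0 d := ⟨hz.1.le, (hz.2.trans hx.2).le⟩
    have hxI := Ioo_subset_Icc_self hx
    have e1 := hc.deriv_le_slope hzI hxI hz.2 hdiff
    have e2 := hc.slope_anti_adjacent hyI hxI hyz hz.2
    rw [slope_def_field] at e1
    have e3 : 0 < (h z - h y) / (z - y) := by linarith
    have := (div_pos_iff_of_pos_right (by linarith : 0 < z - y)).1 e3
    linarith
  filter_upwards [hmono.ae_differentiableWithinAt_of_mem] with y hy hyx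
  exact (hy hyx).differentiableAt (Ioo_mem_nhds hyx.1 hyx.2)

/-- At a middle point where `h` increases, the integrand is controlled by its integral over the
left end interval: there the derivative is larger and `h` is smaller. -/
lemma weightedFisher_le_left {d : ℝ} {h : ℝ → ℝ} (hd1 : 1 ≤ d) (hd2 : d ≤ 2)
    (h0 : ∀ x ∈ Icc 0 d, 0 ≤ h x)
    (hpos : ∀ x ∈ Ioo 0 d, 0 < h x) (hc : ConcaveOn ℝ (Icc 0 d) h) {x : ℝ}
    (hx : x ∈ Ioo (1 / 100) (d - 1 / 100)) (hp : 0 < deriv h x) :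
    weightedFisher d h x ≤ 3000000 * ∫ y in Icc (0 : ℝ) (1 / 100), weightedFisher d h y := by
  obtain ⟨hx1, hx2⟩ := hx
  have hxO : x ∈ Ioo 0 d := ⟨by linarith, by linarith⟩
  have hxI := Ioo_subset_Icc_self hxO
  have hhx := hpos x hxO
  have hdiff := differentiableAt_of_deriv_ne_zero hp.ne'
  set c := (deriv h x) ^ 2 / h x with hcdef
  have hc0 : 0 ≤ c := by positivity
  have hle : weightedFisher d h x ≤ c := by
    have m0 : 0 ≤ min x (d - x) := le_min (by linarith) (by linarith)
    have m1 : min x (d - x) ≤ 1 := by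
      rcases le_total x 1 with hx | hx
      · exact (min_le_left _ _).trans hx
      · exact (min_le_right _ _).trans (by linarith)
    exact mul_le_of_le_one_right hc0 (pow_le_one₀ m0 m1)
  have hint : ∫ y in Icc (0 : ℝ) (1 / 100), c * y ^ 2 = c / 3000000 := by
    rw [integral_Icc_eq_integral_Ioc, ← intervalIntegral.integral_of_le (by norm_num),
      intervalIntegral.integral_const_mul, integral_pow]
    norm_num
    ring
  have hmono : ∫ y in Icc (0 : ℝ) (1 / 100), c * y ^ 2 ≤
      ∫ y in Icc (0 : ℝ) (1 / 100), weightedFisher d h y := by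
    refine setIntegral_mono_on_ae ?_ ?_ measurableSet_Icc ?_
    · exact (Continuous.continuousOn (by fun_prop)).integrableOn_Icc
    · exact (integrableOn_weightedFisher h0 hpos hc).mono_set
        (Icc_subset_Icc_right (by linarith))
    filter_upwards [ae_differentiableAt_left hc hxO hp] with y hy hyI
    rcases hyI.1.eq_or_lt with rfl | hy0
    · simpa using weightedFisher_nonneg h0 (x := 0) ⟨le_rfl, by linarith⟩
    have hyx : y < x := hyI.2.trans_lt hx1
    have hyO : y ∈ Ioo 0 d := ⟨hy0, hyx.trans hxO.2⟩
    have hyd := hy ⟨hy0, hyx⟩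
    have e1 := hc.deriv_le_slope (Ioo_subset_Icc_self hyO) hxI hyx hdiff
    have e2 := e1.trans (hc.slope_le_deriv (Ioo_subset_Icc_self hyO) hxI hyx hyd)
    have hhy := hpos y hyO
    have hhyx : h y ≤ h x := by
      rw [slope_def_field, le_div_iff₀ (by linarith)] at e1
      have := mul_pos hp (sub_pos.2 hyx)
      linarith
    have hmin : min y (d - y) = y := min_eq_left (by linarith [hyI.2])
    unfold weightedFisher
    rw [hmin, hcdef]
    gcongr
  rw [hint] at hmono
  linarith

/-- Step 1 of the proof of Theorem 9.1: there is a universal constant `C > 0` such that for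
every `d ∈ [1,2]` and every concave `h : [0,d] → [0,∞)` positive on `(0,d)`, the integral
of `(h')²/h · ‖x‖²` over `[0, 10⁻²] ∪ [d - 10⁻², d]` dominates `C` times the integral over
all of `[0,d]`, where `‖x‖ := min{x, d-x}` and `h'` is the a.e.-defined derivative of the
concave function `h`. -/
theorem statement17 :
    ∃ C > (0 : ℝ),
      ∀ (d : ℝ) (h : ℝ → ℝ),
        1 ≤ d → d ≤ 2 →
        (∀ x ∈ Icc 0 d, 0 ≤ h x) →
        (∀ x ∈ Ioo 0 d, 0 < h x) →
        ConcaveOn ℝ (Icc 0 d) h →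
        C * ∫ x in Icc (0:ℝ) d, (deriv h x) ^ 2 / h x * (min x (d - x)) ^ 2 ≤
          ∫ x in (Icc (0:ℝ) (1/100) ∪ Icc (d - 1/100) d),
            (deriv h x) ^ 2 / h x * (min x (d - x)) ^ 2 := by
  refine ⟨1 / 6000001, by norm_num, fun d h hd1 hd2 h0 hpos hc => ?_⟩
  change 1 / 6000001 * ∫ x in Icc (0 : ℝ) d, weightedFisher d h x ≤
    ∫ x in (Icc (0 : ℝ) (1 / 100) ∪ Icc (d - 1 / 100) d), weightedFisher d h x
  have hI := integrableOn_weightedFisher h0 hpos hc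
  have hsubL : Icc (0 : ℝ) (1 / 100) ⊆ Icc 0 d := Icc_subset_Icc_right (by linarith)
  have hsubR : Icc (d - 1 / 100) d ⊆ Icc 0 d := Icc_subset_Icc_left (by linarith)
  have hsub := union_subset hsubL hsubR
  have hsubM : Ioo (1 / 100) (d - 1 / 100) ⊆ Icc 0 d := fun x hx =>
    ⟨by linarith [hx.1], by linarith [hx.2]⟩
  set A := Icc (0 : ℝ) (1 / 100) ∪ Icc (d - 1 / 100) d with hA
  set E := ∫ x in A, weightedFisher d h x with hE
  have hAm : MeasurableSet A := measurableSet_Icc.union measurableSet_Icc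
  have hnn : 0 ≤ᵐ[volume.restrict A] weightedFisher d h :=
    (ae_restrict_iff' hAm).2 (ae_of_all _ fun x hx => weightedFisher_nonneg h0 (hsub hx))
  have hE0 : 0 ≤ E := integral_nonneg_of_ae hnn
  have hL : ∫ x in Icc (0 : ℝ) (1 / 100), weightedFisher d h x ≤ E :=
    setIntegral_mono_set (hI.mono_set hsub) hnn subset_union_left.eventuallyLE
  have hR : ∫ x in Icc (d - 1 / 100) d, weightedFisher d h x ≤ E :=
    setIntegral_mono_set (hI.mono_set hsub) hnn subset_union_right.eventuallyLE
  have hmid : ∀ x ∈ Ioo (1 / 100) (d - 1 / 100), weightedFisher d h x ≤ 3000000 * E := by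
    intro x hx
    rcases lt_trichotomy (deriv h x) 0 with hp | hp | hp
    · have hmem : ∀ {y}, y ∈ Icc 0 d → d - y ∈ Icc 0 d := fun hy =>
        ⟨by linarith [hy.2], by linarith [hy.1]⟩
      have hc' : ConcaveOn ℝ (Icc 0 d) (fun y => h (d - y)) := by
        refine ⟨convex_Icc _ _, fun y hy z hz a b ha hb hab => ?_⟩
        have k := hc.2 (hmem hy) (hmem hz) ha hb hab
        have e : a • (d - y) + b • (d - z) = d - (a • y + b • z) := by
          simp only [smul_eq_mul]
          linear_combination d * hab
        rwa [e] at k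
      have k := weightedFisher_le_left (h := fun y => h (d - y)) hd1 hd2
        (fun y hy => h0 _ (hmem hy))
        (fun y hy => hpos _ ⟨by linarith [hy.2], by linarith [hy.1]⟩) hc' (x := d - x)
        ⟨by linarith [hx.2], by linarith [hx.1]⟩
        (by rw [deriv_comp_const_sub, sub_sub_cancel]; linarith)
      rw [weightedFisher_reflect, sub_sub_cancel] at k
      have e : ∫ y in Icc (0 : ℝ) (1 / 100), weightedFisher d (fun y => h (d - y)) y =
          ∫ y in Icc (d - 1 / 100) d, weightedFisher d h y := by
        simp only [weightedFisher_reflect]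
        rw [integral_Icc_eq_integral_Ioc, ← intervalIntegral.integral_of_le (by norm_num),
          intervalIntegral.integral_comp_sub_left (weightedFisher d h), sub_zero,
          intervalIntegral.integral_of_le (by linarith), ← integral_Icc_eq_integral_Ioc]
      rw [e] at k
      linarith
    · have : weightedFisher d h x = 0 := by simp [weightedFisher, hp]
      rw [this]
      positivity
    · linarith [weightedFisher_le_left hd1 hd2 h0 hpos hc hx hp]
  have hM : ∫ x in Ioo (1 / 100) (d - 1 / 100), weightedFisher d h x ≤ 6000000 * E := by
    have k := setIntegral_mono_on (hI.mono_set hsubM)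
      (integrableOn_const measure_Ioo_lt_top.ne) measurableSet_Ioo hmid
    rw [setIntegral_const, smul_eq_mul, Real.volume_real_Ioo_of_le (by linarith)] at k
    nlinarith
  have hsplit : ∫ x in Icc (0 : ℝ) d, weightedFisher d h x =
      E + ∫ x in Ioo (1 / 100) (d - 1 / 100), weightedFisher d h x := by
    rw [hE, ← setIntegral_union _ measurableSet_Ioo (hI.mono_set hsub) (hI.mono_set hsubM)]
    · congr 2
      ext x
      simp only [hA, mem_union, mem_Icc, mem_Ioo]
      grind
    · rw [Set.disjoint_left]
      intro x hx hx'
      simp only [hA, mem_union, mem_Icc, mem_Ioo] at hx hx'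
      grind
  rw [hsplit]
  linarith
end

section
/- For a bounded open convex planar domain Ω (so h is concave), the first Neumann eigenvalue of the weighted interval satisfies μ₁(N) ≥ π²/d² + (3/4)·[∫₀^d (h'(x))²/h(x) · (φ'(x))² dx] / [∫₀^d h(x)·(φ'(x))² dx]. -/
/-!
Write `μ = mu1N d h`, `v = φ'` and `w = √h v`. Differentiating the eigenvalue equation puts it in
Schrödinger form `-w'' + ((3/4) (h'/h)² - h''/(2h)) w = μ w`, with Dirichlet conditions, because
`φ'` vanishes at both ends. Since `h'' ≤ 0`, testing with `w` and using the Dirichlet inequality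
`∫ w'² ≥ (π/d)² ∫ w²` gives the claim.

To avoid boundary terms and square roots, both steps are merged: with
`cotd = (π/d) cot (π x / d)`, the function `energy = w w' - cotd w²` satisfies
`energy' = -h'' v² / 2 + (w' - cotd w)² + ((π/d)² + (3/4) (h'/h)² - μ) w²` (`energy_deriv`), and it
vanishes at both ends, so the integral of the last term is at most `0`.

Regularity takes three observations. Where `v ≠ 0`, the equation itself makes `h` twice
differentiable (`h_second`); at zeros of `v` the only term of `energy` containing `h'` is `h' v²`,
which is quadratically small. Near the endpoints, where `h` may vanish and `h'` may blow up,
concavity gives `|h'| ≤ h / δ` and `|v| = O(δ)`, with `δ` the distance to the boundary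
(`conc_deriv`, `v_bound`), so `energy` is `O(δ)` and all integrands are bounded. Finally `φ' ≠ 0`
requires `μ > 0`, a crude Poincaré inequality for concave weights (`mu_pos`).
-/

open MeasureTheory Real Set

/-! ### Elementary consequences of concavity -/

lemma conc_left {d : ℝ} {h : ℝ → ℝ} (hnonneg : ∀ x ∈ Icc 0 d, 0 ≤ h x)
    (hconc : ConcaveOn ℝ (Icc 0 d) h) {t x : ℝ} (ht : 0 ≤ t) (htx : t < x) (hx : x ≤ d) :
    (d - x) * h t ≤ (d - t) * h x := by
  have hdt : 0 < d - t := by linarith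
  have h1 := hconc.2 (show t ∈ Icc 0 d from ⟨ht, by linarith⟩) (show d ∈ Icc 0 d from ⟨by linarith, le_rfl⟩)
    (show 0 ≤ (d - x) / (d - t) from div_nonneg (by linarith) hdt.le)
    (show 0 ≤ (x - t) / (d - t) from div_nonneg (by linarith) hdt.le) (by field_simp; ring)
  have h2 : ((d - x) / (d - t)) • t + ((x - t) / (d - t)) • d = x := by
    simp only [smul_eq_mul]; field_simp; ring
  rw [h2] at h1
  simp only [smul_eq_mul] at h1
  have h3 : 0 ≤ (x - t) / (d - t) * h d :=
    mul_nonneg (div_nonneg (by linarith) hdt.le) (hnonneg d ⟨by linarith, le_rfl⟩)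
  have h4 : (d - x) / (d - t) * h t ≤ h x := by linarith
  rw [div_mul_eq_mul_div, div_le_iff₀ hdt] at h4
  linarith

lemma conc_right {d : ℝ} {h : ℝ → ℝ} (hnonneg : ∀ x ∈ Icc 0 d, 0 ≤ h x)
    (hconc : ConcaveOn ℝ (Icc 0 d) h) {t x : ℝ} (hx : 0 ≤ x) (htx : x < t) (ht : t ≤ d) :
    x * h t ≤ t * h x := by
  have ht0 : 0 < t := by linarith
  have h1 := hconc.2 (show (0 : ℝ) ∈ Icc 0 d from ⟨le_rfl, by linarith⟩) (show t ∈ Icc 0 d from ⟨by linarith, ht⟩)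
    (show 0 ≤ (t - x) / t from div_nonneg (by linarith) ht0.le)
    (show 0 ≤ x / t from div_nonneg (by linarith) ht0.le) (by field_simp; ring)
  have h2 : ((t - x) / t) • (0 : ℝ) + (x / t) • t = x := by
    simp only [smul_eq_mul]; field_simp; ring
  rw [h2] at h1
  simp only [smul_eq_mul] at h1
  have h3 : 0 ≤ (t - x) / t * h 0 :=
    mul_nonneg (div_nonneg (by linarith) ht0.le) (hnonneg 0 ⟨le_rfl, by linarith⟩)
  have h4 : x / t * h t ≤ h x := by linarith
  rw [div_mul_eq_mul_div, div_le_iff₀ ht0] at h4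
  linarith

/-- The tangent line of `h` at `x` lies above the nonnegative function `h` at both endpoints,
whence `-h x / (d - x) ≤ h' x ≤ h x / x`; at points of non-differentiability `deriv` is `0`. -/
lemma conc_deriv {d : ℝ} {h : ℝ → ℝ} (hnonneg : ∀ x ∈ Icc 0 d, 0 ≤ h x)
    (hconc : ConcaveOn ℝ (Icc 0 d) h) {x : ℝ} (hx : x ∈ Ioo 0 d) :
    |deriv h x| * min x (d - x) ≤ h x := by
  have hx0 := hx.1
  have hxd := hx.2
  have hhx := hnonneg x ⟨hx0.le, hxd.le⟩
  by_cases hd : DifferentiableAt ℝ h x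
  · have h1 := hconc.le_slope_of_hasDerivAt ⟨le_rfl, by linarith⟩ ⟨hx0.le, hxd.le⟩ hx0
      hd.hasDerivAt
    have h2 := hconc.slope_le_of_hasDerivAt ⟨hx0.le, hxd.le⟩ ⟨by linarith, le_rfl⟩ hxd
      hd.hasDerivAt
    rw [slope_def_field, le_div_iff₀ (by linarith)] at h1
    rw [slope_def_field, div_le_iff₀ (by linarith)] at h2
    have h3 := hnonneg 0 ⟨le_rfl, by linarith⟩
    have h4 := hnonneg d ⟨by linarith, le_rfl⟩
    rcases abs_cases (deriv h x) with ⟨e, he⟩ | ⟨e, he⟩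
    · rw [e]
      have := mul_le_mul_of_nonneg_left (min_le_left x (d - x)) he
      linarith
    · rw [e]
      have := mul_le_mul_of_nonneg_left (min_le_right x (d - x)) (neg_nonneg.2 he.le)
      linarith
  · rw [deriv_zero_of_not_differentiableAt hd]; simpa using hhx

/-! ### Positivity of the first eigenvalue -/

/-- Cauchy–Schwarz for the increment of `f`, with the weight inserted by `m ≤ h`. -/
lemma increment_sq {a b m : ℝ} {h f : ℝ → ℝ} (hab : a < b) (hm : 0 ≤ m)
    (hmh : ∀ t ∈ Icc a b, m ≤ h t) (hcont : ContinuousOn h (Icc a b)) (hf : ContDiff ℝ 1 f) :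
    m * (f b - f a) ^ 2 ≤ (b - a) * ∫ t in a..b, h t * (deriv f t) ^ 2 := by
  have hf' : Continuous (deriv f) := hf.continuous_deriv le_rfl
  have hint : ∫ t in a..b, deriv f t = f b - f a :=
    intervalIntegral.integral_deriv_eq_sub
      (fun x _ => hf.differentiable one_ne_zero x) (hf'.intervalIntegrable _ _)
  set s := (f b - f a) / (b - a) with hs
  have hba : 0 < b - a := by linarith
  have hsb : s * (b - a) = f b - f a := by rw [hs]; field_simp
  have h1 : ∫ t in a..b, (m * (2 * s) * deriv f t - m * s ^ 2) ≤
      ∫ t in a..b, h t * (deriv f t) ^ 2 := by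
    apply intervalIntegral.integral_mono_on hab.le
    · exact (by fun_prop : Continuous fun t => m * (2 * s) * deriv f t - m * s ^ 2).intervalIntegrable
        _ _
    · apply ContinuousOn.intervalIntegrable
      rw [uIcc_of_le hab.le]
      fun_prop
    · intro t ht
      nlinarith [mul_nonneg hm (sq_nonneg (deriv f t - s)),
        mul_le_mul_of_nonneg_right (hmh t ht) (sq_nonneg (deriv f t))]
  rw [intervalIntegral.integral_sub ((hf'.intervalIntegrable _ _).const_mul _)
    (intervalIntegrable_const), intervalIntegral.integral_const_mul, hint,
    intervalIntegral.integral_const, smul_eq_mul] at h1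
  have h2 := mul_le_mul_of_nonneg_left h1 hba.le
  rw [← hsb] at h2 ⊢
  nlinarith

/-- A crude Poincaré inequality: a concave weight dominates, between two points, the smaller of
its two values there, so `h x * h y * (f x - f y)²` is controlled by `∫ h f'²`. -/
lemma mu_pos {d : ℝ} {h : ℝ → ℝ} (hd0 : 0 < d) (hcont : ContinuousOn h (Icc 0 d))
    (hnonneg : ∀ x ∈ Icc 0 d, 0 ≤ h x) (hpos : ∀ x ∈ Ioo 0 d, 0 < h x)
    (hconc : ConcaveOn ℝ (Icc 0 d) h) : 0 < mu1N d h := by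
  obtain ⟨M, hM⟩ := isCompact_Icc.exists_bound_of_continuousOn hcont
  have hy : d / 2 ∈ Ioo 0 d := ⟨by linarith, by linarith⟩
  have hyI : d / 2 ∈ Icc 0 d := Ioo_subset_Icc_self hy
  have hhy := hpos _ hy
  have hMh : ∀ x ∈ Icc 0 d, h x ≤ M := fun x hx => (le_abs_self _).trans (hM x hx)
  have hM0 : 0 < M := hhy.trans_le (hMh _ hyI)
  have hii : ∀ g : ℝ → ℝ, ContinuousOn g (Icc 0 d) → IntervalIntegrable g volume 0 d := by
    intro g hg
    apply ContinuousOn.intervalIntegrable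
    rwa [uIcc_of_le hd0.le]
  have hH : 0 < ∫ x in (0:ℝ)..d, h x :=
    intervalIntegral.integral_pos hd0 hcont (fun x hx => hnonneg x ⟨hx.1.le, hx.2⟩)
      ⟨_, hyI, hhy⟩
  have key : h (d / 2) / (M * d * d) ≤ mu1N d h := by
    apply le_csInf
    · set c := (∫ x in (0:ℝ)..d, h x * x) / ∫ x in (0:ℝ)..d, h x with hc
      refine ⟨_, fun x => x - c, by fun_prop, ?_, ?_, rfl⟩
      · simp_rw [mul_sub]
        rw [intervalIntegral.integral_sub (hii _ (by fun_prop)) (hii _ (by fun_prop)),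
          intervalIntegral.integral_mul_const, hc]
        field_simp; ring
      · apply ne_of_gt
        apply intervalIntegral.integral_pos hd0 (by fun_prop)
          (fun x hx => mul_nonneg (hnonneg x ⟨hx.1.le, hx.2⟩) (sq_nonneg _))
        by_cases hcd : d / 2 = c
        · refine ⟨d / 3, ⟨by linarith, by linarith⟩, mul_pos (hpos _ ⟨by linarith, by linarith⟩) ?_⟩
          have : d / 3 - c ≠ 0 := by rw [← hcd]; intro h; linarith
          positivity
        · refine ⟨d / 2, hyI, mul_pos hhy ?_⟩
          have : d / 2 - c ≠ 0 := sub_ne_zero.2 hcd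
          positivity
    · rintro r ⟨f, hf, hf0, hfne, rfl⟩
      have hfc : Continuous f := hf.continuous
      have hf' : Continuous (deriv f) := hf.continuous_deriv le_rfl
      set A := ∫ x in (0:ℝ)..d, h x * (f x) ^ 2 with hA
      set D := ∫ x in (0:ℝ)..d, h x * (deriv f x) ^ 2 with hD
      have hDnn : 0 ≤ D := intervalIntegral.integral_nonneg hd0.le
        (fun x hx => mul_nonneg (hnonneg x hx) (sq_nonneg _))
      have hA0 : 0 < A := lt_of_le_of_ne (intervalIntegral.integral_nonneg hd0.le
        (fun x hx => mul_nonneg (hnonneg x hx) (sq_nonneg _))) (Ne.symm hfne)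
      have hinc : ∀ a b m, 0 ≤ a → a < b → b ≤ d → 0 ≤ m → (∀ t ∈ Icc a b, m ≤ h t) →
          m * (f b - f a) ^ 2 ≤ d * D := by
        intro a b m ha hab hb hm hmh
        refine (increment_sq hab hm hmh (hcont.mono (Icc_subset_Icc ha hb)) hf).trans ?_
        have : ∫ t in a..b, h t * (deriv f t) ^ 2 ≤ D := by
          apply intervalIntegral.integral_mono_interval ha hab.le hb _ (hii _ (by fun_prop))
          filter_upwards [ae_restrict_mem measurableSet_Ioc] with x hx
          exact mul_nonneg (hnonneg x ⟨hx.1.le, hx.2⟩) (sq_nonneg _)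
        calc _ ≤ (b - a) * D := mul_le_mul_of_nonneg_left this (by linarith)
          _ ≤ d * D := mul_le_mul_of_nonneg_right (by linarith) hDnn
      have hmin : ∀ a b, a ∈ Icc 0 d → b ∈ Icc 0 d → ∀ t ∈ Icc a b, min (h a) (h b) ≤ h t := by
        intro a b ha hb t ht
        exact hconc.min_le_of_mem_Icc ha hb ht
      have hpt : ∀ x ∈ Icc 0 d, h (d / 2) * (h x * (f x - f (d / 2)) ^ 2) ≤ M * (d * D) := by
        intro x hx
        have hm0 : 0 ≤ min (h x) (h (d / 2)) := le_min (hnonneg x hx) hhy.le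
        have hmm : h (d / 2) * h x ≤ M * min (h x) (h (d / 2)) := by
          rcases min_cases (h x) (h (d / 2)) with ⟨e, _⟩ | ⟨e, _⟩ <;> rw [e]
          · exact mul_le_mul_of_nonneg_right (hMh _ hyI) (hnonneg x hx)
          · rw [mul_comm]; exact mul_le_mul_of_nonneg_right (hMh _ hx) hhy.le
        have hmd : min (h x) (h (d / 2)) * (f x - f (d / 2)) ^ 2 ≤ d * D := by
          rcases lt_trichotomy x (d / 2) with hlt | heq | hgt
          · have := hinc x (d / 2) _ hx.1 hlt hyI.2 hm0 (hmin _ _ hx hyI)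
            rwa [← neg_sub, neg_sq]
          · rw [← heq]; simp; positivity
          · exact hinc (d / 2) x _ hyI.1 hgt hx.2 hm0 (by rw [min_comm]; exact hmin _ _ hyI hx)
        calc _ = (h (d / 2) * h x) * (f x - f (d / 2)) ^ 2 := by ring
          _ ≤ (M * min (h x) (h (d / 2))) * (f x - f (d / 2)) ^ 2 := by gcongr
          _ = M * (min (h x) (h (d / 2)) * (f x - f (d / 2)) ^ 2) := by ring
          _ ≤ _ := by gcongr
      have hI := intervalIntegral.integral_mono_on hd0.le (hii _ (by fun_prop))
        (intervalIntegrable_const (μ := volume)) hpt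
      -- Expanding the square, the cross term vanishes because `f` has weighted mean zero.
      have hexp : ∫ x in (0:ℝ)..d, h x * (f x - f (d / 2)) ^ 2 =
          A + f (d / 2) ^ 2 * ∫ x in (0:ℝ)..d, h x := by
        have : ∀ x, h x * (f x - f (d / 2)) ^ 2 =
            h x * f x ^ 2 - 2 * f (d / 2) * (h x * f x) + f (d / 2) ^ 2 * h x := by
          intro x; ring
        simp_rw [this]
        rw [intervalIntegral.integral_add (hii _ (by fun_prop)) (hii _ (by fun_prop)),
          intervalIntegral.integral_sub (hii _ (by fun_prop)) (hii _ (by fun_prop)),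
          intervalIntegral.integral_const_mul, intervalIntegral.integral_const_mul, hf0]
        ring
      rw [intervalIntegral.integral_const_mul, hexp, intervalIntegral.integral_const,
        smul_eq_mul] at hI
      rw [div_le_div_iff₀ (by positivity) hA0]
      have : 0 ≤ h (d / 2) * (f (d / 2) ^ 2 * ∫ x in (0:ℝ)..d, h x) := by positivity
      nlinarith
  exact lt_of_lt_of_le (by positivity) key

/-! ### The energy function -/

/-- `φ'` vanishes linearly at both endpoints, whatever the rate at which `h` degenerates there:
concavity gives `h t ≤ 2 h x` for `t` between `x` and the nearer endpoint, so integrating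
`(h φ')' = -μ h φ` from that endpoint bounds `h φ'` by a multiple of `h x` times the distance. -/
lemma v_bound {d μ B : ℝ} {h φ v : ℝ → ℝ} (hcont : ContinuousOn h (Icc 0 d))
    (hnonneg : ∀ x ∈ Icc 0 d, 0 ≤ h x) (hpos : ∀ x ∈ Ioo 0 d, 0 < h x)
    (hconc : ConcaveOn ℝ (Icc 0 d) h) (hv : ContinuousOn v (Icc 0 d))
    (hu : ∀ x ∈ Ioo 0 d, HasDerivAt (fun t => h t * v t) (-(μ * (h x * φ x))) x)
    (hB : ∀ x ∈ Icc 0 d, |μ * φ x| ≤ B) (hv0 : v 0 = 0) (hvd : v d = 0)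
    {x : ℝ} (hx : x ∈ Ioo 0 d) : |v x| ≤ 2 * B * min x (d - x) := by
  have hx0 := hx.1
  have hxd := hx.2
  have hhx := hpos x hx
  have huc : ContinuousOn (fun t => h t * v t) (Icc 0 d) := hcont.mul hv
  have hB0 : 0 ≤ B := (abs_nonneg _).trans (hB x (Ioo_subset_Icc_self hx))
  have hder : ∀ t ∈ Ioo 0 d, h t ≤ 2 * h x → |-(μ * (h t * φ t))| ≤ 2 * B * h x := by
    intro t ht h2
    have e : -(μ * (h t * φ t)) = -(h t * (μ * φ t)) := by ring
    rw [e, abs_neg, abs_mul, abs_of_pos (hpos t ht)]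
    calc h t * |μ * φ t| ≤ (2 * h x) * B :=
          mul_le_mul h2 (hB t (Ioo_subset_Icc_self ht)) (abs_nonneg _) (by linarith)
      _ = _ := by ring
  rcases le_total x (d - x) with hle | hle
  · rw [min_eq_left hle]
    obtain ⟨t, ht, hte⟩ := exists_hasDerivAt_eq_slope (fun t => h t * v t)
      (fun t => -(μ * (h t * φ t))) hx0 (huc.mono (Icc_subset_Icc_right hxd.le))
      (fun t ht => hu t ⟨ht.1, ht.2.trans hxd⟩)
    have h1 := conc_left hnonneg hconc ht.1.le ht.2 hxd.le
    have h2 := hder t ⟨ht.1, ht.2.trans hxd⟩ (by nlinarith [ht.1])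
    simp only [hv0, mul_zero, sub_zero] at hte
    rw [hte, abs_div, abs_mul, abs_of_pos hhx, abs_of_pos hx0, div_le_iff₀ hx0] at h2
    nlinarith
  · rw [min_eq_right hle]
    obtain ⟨t, ht, hte⟩ := exists_hasDerivAt_eq_slope (fun t => h t * v t)
      (fun t => -(μ * (h t * φ t))) hxd (huc.mono (Icc_subset_Icc_left hx0.le))
      (fun t ht => hu t ⟨hx0.trans ht.1, ht.2⟩)
    have h1 := conc_right hnonneg hconc hx0.le ht.1 ht.2.le
    have h2 := hder t ⟨hx0.trans ht.1, ht.2⟩ (by nlinarith [ht.2])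
    simp only [hvd, mul_zero, zero_sub] at hte
    have hdx : 0 < d - x := by linarith
    rw [hte, abs_div, abs_neg, abs_mul, abs_of_pos hhx, abs_of_pos hdx, div_le_iff₀ hdx] at h2
    nlinarith

/-- The logarithmic derivative of the Dirichlet ground state `sin (π x / d)` of `[0,d]`. -/
noncomputable def cotd (d x : ℝ) : ℝ := π / d * (Real.cos (π / d * x) / Real.sin (π / d * x))

lemma sin_pos_d {d x : ℝ} (hx : x ∈ Ioo 0 d) : 0 < Real.sin (π / d * x) := by
  have hd : 0 < d := hx.1.trans hx.2
  apply Real.sin_pos_of_pos_of_lt_pi (mul_pos (div_pos pi_pos hd) hx.1)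
  rw [div_mul_eq_mul_div, div_lt_iff₀ hd]
  exact mul_lt_mul_of_pos_left hx.2 pi_pos

lemma hasDerivAt_cotd {d x : ℝ} (hx : x ∈ Ioo 0 d) :
    HasDerivAt (cotd d) (-(π ^ 2 / d ^ 2) - cotd d x ^ 2) x := by
  have hs := (sin_pos_d hx).ne'
  have hl : HasDerivAt (fun y : ℝ => π / d * y) (π / d) x := by
    simpa using (hasDerivAt_id x).const_mul (π / d)
  have := ((hl.cos.div hl.sin hs).const_mul (π / d))
  refine this.congr_deriv ?_
  unfold cotd
  have hd : d ≠ 0 := (hx.1.trans hx.2).ne'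
  set s := Real.sin (π / d * x)
  set c := Real.cos (π / d * x)
  field_simp

lemma cotd_bound {d x : ℝ} (hx : x ∈ Ioo 0 d) : |cotd d x| * min x (d - x) ≤ 2 := by
  have hd : 0 < d := hx.1.trans hx.2
  have hs := sin_pos_d hx
  have hsin : 2 / d * min x (d - x) ≤ Real.sin (π / d * x) := by
    rcases le_total x (d - x) with hle | hle
    · rw [min_eq_left hle]
      have := Real.mul_le_sin (x := π / d * x) (mul_pos (div_pos pi_pos hd) hx.1).le (by
        rw [div_mul_eq_mul_div, div_le_iff₀ hd]; nlinarith [pi_pos])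
      refine le_trans (le_of_eq ?_) this
      field_simp
    · rw [min_eq_right hle]
      have := Real.mul_le_sin (x := π - π / d * x) (by
        have : π / d * x ≤ π := by
          rw [div_mul_eq_mul_div, div_le_iff₀ hd]; nlinarith [pi_pos, hx.2]
        linarith) (by
        have : π / 2 ≤ π / d * x := by
          rw [div_mul_eq_mul_div, le_div_iff₀ hd]; nlinarith [pi_pos]
        linarith)
      rw [Real.sin_pi_sub] at this
      refine le_trans (le_of_eq ?_) this
      field_simp
  have hcos := Real.abs_cos_le_one (π / d * x)
  have hm : 0 < min x (d - x) := lt_min hx.1 (by linarith [hx.2])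
  unfold cotd
  rw [abs_mul, abs_of_pos (div_pos pi_pos hd), abs_div, abs_of_pos hs, ← mul_div_assoc,
    div_mul_eq_mul_div, div_le_iff₀ hs]
  calc π / d * |Real.cos (π / d * x)| * min x (d - x) ≤ π / d * 1 * min x (d - x) := by
        have := pi_pos
        gcongr
    _ = π / 2 * (2 / d * min x (d - x)) := by field_simp
    _ ≤ π / 2 * Real.sin (π / d * x) := by have := pi_pos; gcongr
    _ ≤ 2 * Real.sin (π / d * x) := by have := pi_lt_four; gcongr; linarith

/-- With `w = √h φ'` this is `w w' - cotd w²`, rewritten by means of `(h φ')' = -μ h φ` so that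
it makes sense without differentiability of `φ'`; `v` stands for `φ'`. -/
noncomputable def energy (d μ : ℝ) (h φ v : ℝ → ℝ) (x : ℝ) : ℝ :=
  -(1 / 2) * (deriv h x * v x ^ 2) - μ * (φ x * (h x * v x)) - cotd d x * (v x * (h x * v x))

lemma energy_bound {d μ B M : ℝ} {h φ v : ℝ → ℝ}
    (hnonneg : ∀ x ∈ Icc 0 d, 0 ≤ h x) (hconc : ConcaveOn ℝ (Icc 0 d) h)
    (hB : ∀ x ∈ Icc 0 d, |μ * φ x| ≤ B) (hM : ∀ x ∈ Icc 0 d, h x ≤ M)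
    (hv : ∀ x ∈ Ioo 0 d, |v x| ≤ 2 * B * min x (d - x)) {x : ℝ} (hx : x ∈ Ioo 0 d) :
    |energy d μ h φ v x| ≤ 12 * B ^ 2 * M * min x (d - x) := by
  have hxI := Ioo_subset_Icc_self hx
  have h1 := conc_deriv hnonneg hconc hx
  have h2 := cotd_bound hx
  have h3 := hv x hx
  have h4 := hB x hxI
  have h5 := hM x hxI
  have h6 := hnonneg x hxI
  have hm : 0 < min x (d - x) := lt_min hx.1 (by linarith [hx.2])
  unfold energy
  set m := min x (d - x)
  have hB0 : 0 ≤ B := (abs_nonneg _).trans h4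
  have hM0 : 0 ≤ M := h6.trans h5
  have hv2 : v x ^ 2 ≤ (2 * B * m) ^ 2 := by
    rw [← sq_abs]; gcongr
  have a1 : |(1 / 2) * (deriv h x * v x ^ 2)| ≤ 2 * B ^ 2 * M * m := by
    rw [abs_mul, abs_mul, abs_of_nonneg (sq_nonneg (v x)), abs_of_pos (by norm_num : (0:ℝ) < 1 / 2)]
    calc 1 / 2 * (|deriv h x| * v x ^ 2) ≤ 1 / 2 * (|deriv h x| * (2 * B * m) ^ 2) := by gcongr
      _ = 2 * B ^ 2 * (|deriv h x| * m) * m := by ring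
      _ ≤ 2 * B ^ 2 * M * m := by gcongr; linarith
  have a2 : |μ * (φ x * (h x * v x))| ≤ 2 * B ^ 2 * M * m := by
    have e : μ * (φ x * (h x * v x)) = (μ * φ x) * h x * v x := by ring
    rw [e, abs_mul, abs_mul, abs_of_nonneg h6]
    calc |μ * φ x| * h x * |v x| ≤ B * M * (2 * B * m) := by gcongr
      _ = _ := by ring
  have a3 : |cotd d x * (v x * (h x * v x))| ≤ 8 * B ^ 2 * M * m := by
    have e : cotd d x * (v x * (h x * v x)) = cotd d x * (h x * v x ^ 2) := by ring
    rw [e, abs_mul, abs_of_nonneg (by positivity : 0 ≤ h x * v x ^ 2)]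
    calc |cotd d x| * (h x * v x ^ 2) ≤ |cotd d x| * (M * (2 * B * m) ^ 2) := by gcongr
      _ = 4 * B ^ 2 * M * (|cotd d x| * m) * m := by ring
      _ ≤ 4 * B ^ 2 * M * 2 * m := by gcongr
      _ = _ := by ring
  rw [abs_le] at a1 a2 a3 ⊢
  constructor <;> linarith [a1.1, a1.2, a2.1, a2.2, a3.1, a3.2]

lemma energy_eq_zero {d μ : ℝ} {h φ v : ℝ → ℝ} {a : ℝ} (hv : v a = 0) :
    energy d μ h φ v a = 0 := by
  simp [energy, hv]

/-- Where `v ≠ 0` the equation makes `h` as smooth as `v' = φ''`, since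
`h' = -h (μ φ + φ'') / φ'` there; concavity then gives the sign of `h''`. -/
lemma h_second {d μ : ℝ} {h φ v v₁ v₂ : ℝ → ℝ} (hconc : ConcaveOn ℝ (Icc 0 d) h)
    (hφ : ∀ x ∈ Ioo 0 d, HasDerivAt φ (v x) x) (hv : ∀ x ∈ Ioo 0 d, HasDerivAt v (v₁ x) x)
    (hv₁ : ∀ x ∈ Ioo 0 d, HasDerivAt v₁ (v₂ x) x)
    (hu : ∀ x ∈ Ioo 0 d, HasDerivAt (fun t => h t * v t) (-(μ * (h x * φ x))) x)
    {x : ℝ} (hx : x ∈ Ioo 0 d) (hvx : v x ≠ 0) :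
    deriv h x * v x + h x * v₁ x = -(μ * (h x * φ x)) ∧
      ∃ p ≤ 0, HasDerivAt (deriv h) p x := by
  have hder : ∀ y ∈ Ioo 0 d, v y ≠ 0 →
      HasDerivAt h (-(h y * (μ * φ y + v₁ y)) / v y) y := by
    intro y hy hvy
    have h1 := (hu y hy).div (hv y hy) hvy
    have h2 : h =ᶠ[nhds y] fun t => h t * v t / v t := by
      filter_upwards [(hv y hy).continuousAt.eventually_ne hvy] with t ht
      field_simp
    refine (h1.congr_of_eventuallyEq h2).congr_deriv ?_
    field_simp; ring
  have hev : ∀ᶠ y in nhds x, y ∈ Ioo 0 d ∧ v y ≠ 0 :=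
    (isOpen_Ioo.eventually_mem hx).and ((hv x hx).continuousAt.eventually_ne hvx)
  have heq : deriv h =ᶠ[nhds x] fun y => -(h y * (μ * φ y + v₁ y)) / v y := by
    filter_upwards [hev] with y hy
    exact (hder y hy.1 hy.2).deriv
  have hD : DifferentiableAt ℝ (deriv h) x :=
    (((((hder x hx hvx).mul (((hφ x hx).const_mul μ).add (hv₁ x hx))).neg).div (hv x hx)
      hvx).congr_of_eventuallyEq heq).differentiableAt
  refine ⟨?_, deriv (deriv h) x, ?_, hD.hasDerivAt⟩
  · rw [(hder x hx hvx).deriv]; field_simp; ring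
  · obtain ⟨ε, hε, hball⟩ := Metric.eventually_nhds_iff_ball.1 hev
    have hsub : Metric.ball x ε ⊆ Icc 0 d := fun y hy => Ioo_subset_Icc_self (hball y hy).1
    have hanti : AntitoneOn (deriv h) (Metric.ball x ε) :=
      (hconc.subset hsub (convex_ball x ε)).antitoneOn_deriv
        (fun y hy => (hder y (hball y hy).1 (hball y hy).2).differentiableAt)
    rw [← derivWithin_of_mem_nhds (Metric.ball_mem_nhds x hε)]
    exact hanti.derivWithin_nonpos

/-- At a zero of `v` the term `h' v²` is differentiable with derivative `0`, as `h'` is locally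
bounded and `v²` vanishes quadratically; no differentiability of `h` is needed there. -/
lemma hasDerivAt_mul_sq_zero {d : ℝ} {h v : ℝ → ℝ} {v' : ℝ}
    (hnonneg : ∀ x ∈ Icc 0 d, 0 ≤ h x) (hconc : ConcaveOn ℝ (Icc 0 d) h)
    (hcont : ContinuousOn h (Icc 0 d))
    {x : ℝ} (hx : x ∈ Ioo 0 d) (hv : HasDerivAt v v' x) (hvx : v x = 0) :
    HasDerivAt (fun t => deriv h t * v t ^ 2) 0 x := by
  have hm : 0 < min x (d - x) := lt_min hx.1 (by linarith [hx.2])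
  have hc : ContinuousAt h x := hcont.continuousAt (Icc_mem_nhds hx.1 hx.2)
  have hbd : (fun t => deriv h t) =O[nhds x] (fun _ => (1 : ℝ)) := by
    apply Asymptotics.IsBigO.of_bound ((h x + 1) / (min x (d - x) / 2))
    have e1 : ∀ᶠ t in nhds x, h t < h x + 1 := hc.eventually_lt continuousAt_const (by linarith)
    have e2 : ∀ᶠ t in nhds x, min x (d - x) / 2 < min t (d - t) :=
      ContinuousAt.eventually_lt (f := fun _ => min x (d - x) / 2)
        (g := fun t => min t (d - t)) continuousAt_const
        (by fun_prop) (by linarith)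
    filter_upwards [e1, e2, isOpen_Ioo.mem_nhds hx] with t h1 h2 ht
    have h3 := conc_deriv hnonneg hconc ht
    rw [norm_one, mul_one, le_div_iff₀ (by linarith), Real.norm_eq_abs]
    have := mul_le_mul_of_nonneg_left h2.le (abs_nonneg (deriv h t))
    linarith
  have hO : v =O[nhds x] fun t => t - x := by
    simpa [hvx] using hv.isBigO_sub
  have ho : v =o[nhds x] fun _ => (1 : ℝ) := by
    rw [Asymptotics.isLittleO_one_iff]
    simpa [hvx] using hv.continuousAt.tendsto
  rw [hasDerivAt_iff_isLittleO]
  have := hbd.mul_isLittleO (ho.mul_isBigO hO)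
  simp only [one_mul] at this
  refine this.congr' ?_ (by rfl)
  filter_upwards with t
  simp [hvx, sq]

/-- The pointwise inequality behind the theorem. Where `v ≠ 0`, with `w = √h v`, the
derivative of the energy minus `((π/d)² + (3/4)(h'/h)² - μ) w²` equals `-h'' v² / 2 + (w' - cotd w)² ≥ 0`; at zeros of `v`
the energy has derivative `h (μ φ)²`. -/
lemma energy_deriv {d μ : ℝ} {h φ v v₁ v₂ : ℝ → ℝ} (hcont : ContinuousOn h (Icc 0 d))
    (hnonneg : ∀ x ∈ Icc 0 d, 0 ≤ h x) (hpos : ∀ x ∈ Ioo 0 d, 0 < h x)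
    (hconc : ConcaveOn ℝ (Icc 0 d) h)
    (hφ : ∀ x ∈ Ioo 0 d, HasDerivAt φ (v x) x) (hv : ∀ x ∈ Ioo 0 d, HasDerivAt v (v₁ x) x)
    (hv₁ : ∀ x ∈ Ioo 0 d, HasDerivAt v₁ (v₂ x) x)
    (hu : ∀ x ∈ Ioo 0 d, HasDerivAt (fun t => h t * v t) (-(μ * (h x * φ x))) x)
    {x : ℝ} (hx : x ∈ Ioo 0 d) :
    ∃ F', HasDerivAt (energy d μ h φ v) F' x ∧
      (π ^ 2 / d ^ 2 - μ) * (h x * v x ^ 2) + 3 / 4 * (deriv h x ^ 2 / h x * v x ^ 2) ≤ F' := by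
  have hc := hasDerivAt_cotd hx
  have hux := hu x hx
  have hvx := hv x hx
  have hhx := hpos x hx
  have hrest := (((hφ x hx).mul hux).const_mul μ)
  have hrest2 := hc.mul (hvx.mul hux)
  by_cases hz : v x = 0
  · have h0 := hasDerivAt_mul_sq_zero hnonneg hconc hcont hx hvx hz
    refine ⟨_, ((h0.const_mul (-(1 / 2))).sub hrest).sub hrest2, ?_⟩
    simp only [hz, Pi.mul_apply]
    have : 0 ≤ h x * (μ * φ x) ^ 2 := by positivity
    nlinarith
  · obtain ⟨e, p, hp, hhp⟩ := h_second hconc hφ hv hv₁ hu hx hz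
    refine ⟨_, (((hhp.mul (hvx.pow 2)).const_mul (-(1 / 2))).sub hrest).sub hrest2, ?_⟩
    simp only [Pi.mul_apply, Pi.pow_apply]
    have ev : v₁ x = (-(μ * (h x * φ x)) - deriv h x * v x) / h x := by
      field_simp; linarith
    have k1 : 0 ≤ -(1 / 2) * (p * v x ^ 2) := by nlinarith [sq_nonneg (v x)]
    have k2 : 0 ≤ h x * (-(μ * φ x) - deriv h x * v x / (2 * h x) - cotd d x * v x) ^ 2 := by
      positivity
    rw [← sub_nonneg]
    refine (add_nonneg k1 k2).trans (le_of_eq ?_)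
    rw [ev]
    generalize cotd d x = c
    generalize π ^ 2 / d ^ 2 = k
    field_simp
    ring

lemma energy_continuousOn {d K : ℝ} {F : ℝ → ℝ} (hc : ∀ x ∈ Ioo 0 d, ContinuousAt F x)
    (hK : ∀ x ∈ Ioo 0 d, |F x| ≤ K * min x (d - x)) (hK0 : 0 ≤ K) (h0 : F 0 = 0) (hd : F d = 0) :
    ContinuousOn F (Icc 0 d) := by
  have hK' : ∀ x ∈ Icc 0 d, |F x| ≤ K * min x (d - x) := by
    intro x hx
    rcases eq_or_lt_of_le hx.1 with rfl | h1
    · rw [h0, abs_zero]; exact mul_nonneg hK0 (le_min le_rfl (by linarith [hx.2]))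
    rcases eq_or_lt_of_le hx.2 with rfl | h2
    · rw [hd, abs_zero]; exact mul_nonneg hK0 (le_min hx.1 (by linarith))
    exact hK x ⟨h1, h2⟩
  have hend : ∀ a ∈ Icc 0 d, F a = 0 → min a (d - a) = 0 → ContinuousWithinAt F (Icc 0 d) a := by
    intro a _ hFa hma
    have hlim : Filter.Tendsto (fun x => K * min x (d - x)) (nhdsWithin a (Icc 0 d)) (nhds 0) := by
      have : Continuous fun x : ℝ => K * min x (d - x) := by fun_prop
      have h2 := this.continuousWithinAt (s := Icc 0 d) (x := a)
      simpa [ContinuousWithinAt, hma] using h2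
    rw [ContinuousWithinAt, hFa]
    apply squeeze_zero_norm' _ hlim
    filter_upwards [self_mem_nhdsWithin] with x hx
    exact hK' x hx
  intro x hx
  rcases eq_or_lt_of_le hx.1 with rfl | h1
  · exact hend 0 hx h0 (min_eq_left (by linarith [hx.2]))
  rcases eq_or_lt_of_le hx.2 with rfl | h2
  · exact hend x hx hd (by rw [sub_self]; exact min_eq_right hx.1)
  exact (hc x ⟨h1, h2⟩).continuousWithinAt

/-! ### The spectral gap inequality -/

/-- Step 2 of the proof of Theorem 9.1: for the cross-sectional length `h` of a bounded
open convex planar domain (so `h` is concave on `[0,d]`, positive on `(0,d)`, `0 < d ≤ 2`),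
and `φ` the first Neumann eigenfunction of the weighted interval
(`-(hφ')' = μ₁(N)hφ`, `φ(0) = -1`, `φ'(0) = φ'(d) = 0`), one has
`μ₁(N) ≥ π²/d² + (3/4)·(∫₀^d (h')²/h·(φ')²)/(∫₀^d h(φ')²)`. -/
theorem statement19 (d : ℝ) (h φ : ℝ → ℝ)
    (hd0 : 0 < d) (hd2 : d ≤ 2)
    (hcont : ContinuousOn h (Icc 0 d))
    (hnonneg : ∀ x ∈ Icc 0 d, 0 ≤ h x)
    (hpos : ∀ x ∈ Ioo 0 d, 0 < h x)
    (hconc : ConcaveOn ℝ (Icc 0 d) h)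
    (hφ1 : ContDiffOn ℝ 1 φ (Icc 0 d))
    (hφsmooth : ContDiffOn ℝ (⊤ : ℕ∞) φ (Ioo 0 d))
    (hode : ∀ x ∈ Ioo 0 d,
      HasDerivAt (fun t => h t * derivWithin φ (Icc 0 d) t)
        (-(mu1N d h * (h x * φ x))) x)
    (hφ0 : φ 0 = -1)
    (hbc0 : derivWithin φ (Icc 0 d) 0 = 0)
    (hbcd : derivWithin φ (Icc 0 d) d = 0) :
    mu1N d h ≥ π ^ 2 / d ^ 2 +
      3 / 4 * (∫ x in (0:ℝ)..d,
          (deriv h x) ^ 2 / h x * (derivWithin φ (Icc 0 d) x) ^ 2) /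
        ∫ x in (0:ℝ)..d, h x * (derivWithin φ (Icc 0 d) x) ^ 2 := by
  set μ := mu1N d h with hμ
  have hμ0 : 0 < μ := mu_pos hd0 hcont hnonneg hpos hconc
  set v := derivWithin φ (Icc 0 d) with hv
  have hvc : ContinuousOn v (Icc 0 d) :=
    hφ1.continuousOn_derivWithin (uniqueDiffOn_Icc hd0) le_rfl
  have hve : ∀ x ∈ Ioo 0 d, v x = deriv φ x := fun x hx =>
    derivWithin_of_mem_nhds (Icc_mem_nhds hx.1 hx.2)
  have hopen : IsOpen (Ioo 0 d) := isOpen_Ioo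
  have hφd : ∀ x ∈ Ioo 0 d, HasDerivAt φ (v x) x := by
    intro x hx
    rw [hve x hx]
    exact ((hφsmooth.differentiableOn (by simp)).differentiableAt (hopen.mem_nhds hx)).hasDerivAt
  have hs1 : ContDiffOn ℝ 2 (deriv φ) (Ioo 0 d) :=
    hφsmooth.deriv_of_isOpen hopen (WithTop.coe_le_coe.2 (le_top : (2 + 1 : ℕ∞) ≤ ⊤))
  have hs2 : ContDiffOn ℝ 1 (deriv (deriv φ)) (Ioo 0 d) :=
    hs1.deriv_of_isOpen hopen (by norm_num)
  have hvd : ∀ x ∈ Ioo 0 d, HasDerivAt v (deriv (deriv φ) x) x := by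
    intro x hx
    have h1 := ((hs1.differentiableOn (by simp)).differentiableAt (hopen.mem_nhds hx)).hasDerivAt
    exact h1.congr_of_eventuallyEq (Filter.eventuallyEq_of_mem (hopen.mem_nhds hx) hve)
  have hv1d : ∀ x ∈ Ioo 0 d, HasDerivAt (deriv (deriv φ)) (deriv (deriv (deriv φ)) x) x :=
    fun x hx =>
      ((hs2.differentiableOn (by simp)).differentiableAt (hopen.mem_nhds hx)).hasDerivAt
  have hφc := hφ1.continuousOn
  obtain ⟨B, hB⟩ := isCompact_Icc.exists_bound_of_continuousOn
    (continuousOn_const.mul hφc : ContinuousOn (fun x => μ * φ x) (Icc 0 d))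
  obtain ⟨M, hM⟩ := isCompact_Icc.exists_bound_of_continuousOn hcont
  have hM' : ∀ x ∈ Icc 0 d, h x ≤ M := fun x hx => (le_abs_self _).trans (hM x hx)
  have hM0 : 0 ≤ M := (hnonneg 0 ⟨le_rfl, hd0.le⟩).trans (hM' 0 ⟨le_rfl, hd0.le⟩)
  have hvb : ∀ x ∈ Ioo 0 d, |v x| ≤ 2 * B * min x (d - x) := fun x hx =>
    v_bound hcont hnonneg hpos hconc hvc hode hB hbc0 hbcd hx
  have hder : ∀ x : ℝ, ∃ F', x ∈ Ioo 0 d → HasDerivAt (energy d μ h φ v) F' x ∧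
      (π ^ 2 / d ^ 2 - μ) * (h x * v x ^ 2) + 3 / 4 * (deriv h x ^ 2 / h x * v x ^ 2) ≤ F' := by
    intro x
    by_cases hx : x ∈ Ioo 0 d
    · obtain ⟨F', hF⟩ := energy_deriv hcont hnonneg hpos hconc hφd hvd hv1d hode hx
      exact ⟨F', fun _ => hF⟩
    · exact ⟨0, fun hx' => absurd hx' hx⟩
  choose F' hF' using hder
  have hFc : ContinuousOn (energy d μ h φ v) (Icc 0 d) :=
    energy_continuousOn (fun x hx => (hF' x hx).1.continuousAt)
      (fun x hx => energy_bound hnonneg hconc hB hM' hvb hx) (by positivity)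
      (energy_eq_zero hbc0) (energy_eq_zero hbcd)
  have hi1 : ContinuousOn (fun x => h x * v x ^ 2) (Icc 0 d) := hcont.mul (hvc.pow 2)
  have hi1' : IntervalIntegrable (fun x => h x * v x ^ 2) volume 0 d := by
    apply ContinuousOn.intervalIntegrable; rwa [uIcc_of_le hd0.le]
  -- `|h'| ≤ h / δ` and `|v| ≤ 2 B δ`, with `δ` the distance to the boundary, bound the integrand.
  have hi2 : IntegrableOn (fun x => deriv h x ^ 2 / h x * v x ^ 2) (Icc 0 d) := by
    rw [integrableOn_Icc_iff_integrableOn_Ioo]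
    have hmeas : AEStronglyMeasurable (fun x => deriv h x ^ 2 / h x * v x ^ 2)
        (volume.restrict (Ioo 0 d)) := by
      have m1 : AEStronglyMeasurable (deriv h) (volume.restrict (Ioo 0 d)) :=
        (measurable_deriv h).aestronglyMeasurable
      have m2 : AEStronglyMeasurable h (volume.restrict (Ioo 0 d)) :=
        (hcont.mono Ioo_subset_Icc_self).aestronglyMeasurable measurableSet_Ioo
      have m3 : AEStronglyMeasurable v (volume.restrict (Ioo 0 d)) :=
        (hvc.mono Ioo_subset_Icc_self).aestronglyMeasurable measurableSet_Ioo
      exact (((m1.aemeasurable.pow_const 2).div m2.aemeasurable).mul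
        (m3.aemeasurable.pow_const 2)).aestronglyMeasurable
    apply IntegrableOn.of_bound (by simp) hmeas (4 * B ^ 2 * M)
    filter_upwards [ae_restrict_mem measurableSet_Ioo] with x hx
    have hhx := hpos x hx
    have h1 := conc_deriv hnonneg hconc hx
    have hm : 0 < min x (d - x) := lt_min hx.1 (by linarith [hx.2])
    have hB0 : 0 ≤ B := (abs_nonneg _).trans (hB x (Ioo_subset_Icc_self hx))
    rw [Real.norm_eq_abs, abs_of_nonneg (by positivity), div_mul_eq_mul_div, div_le_iff₀ hhx]
    calc deriv h x ^ 2 * v x ^ 2 = |deriv h x| ^ 2 * |v x| ^ 2 := by rw [sq_abs, sq_abs]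
      _ ≤ |deriv h x| ^ 2 * (2 * B * min x (d - x)) ^ 2 := by gcongr; exact hvb x hx
      _ = 4 * B ^ 2 * (|deriv h x| * min x (d - x)) ^ 2 := by ring
      _ ≤ 4 * B ^ 2 * (h x) ^ 2 := by gcongr
      _ = 4 * B ^ 2 * h x * h x := by ring
      _ ≤ 4 * B ^ 2 * M * h x := by gcongr; exact hM' x (Ioo_subset_Icc_self hx)
  have hi2' : IntervalIntegrable (fun x => deriv h x ^ 2 / h x * v x ^ 2) volume 0 d :=
    (intervalIntegrable_iff_integrableOn_Icc_of_le hd0.le).2 hi2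
  have hmain := intervalIntegral.integral_le_sub_of_hasDeriv_right_of_le hd0.le hFc
    (fun x hx => (hF' x hx).1.hasDerivWithinAt)
    ((intervalIntegrable_iff_integrableOn_Icc_of_le hd0.le).1
      ((hi1'.const_mul (π ^ 2 / d ^ 2 - μ)).add (hi2'.const_mul (3 / 4))))
    (fun x hx => (hF' x hx).2)
  rw [energy_eq_zero hbc0, energy_eq_zero hbcd, intervalIntegral.integral_add (hi1'.const_mul _)
    (hi2'.const_mul _), intervalIntegral.integral_const_mul,
    intervalIntegral.integral_const_mul] at hmain
  have hDpos : 0 < ∫ x in (0:ℝ)..d, h x * v x ^ 2 := by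
    apply intervalIntegral.integral_pos hd0 hi1
      (fun x hx => mul_nonneg (hnonneg x ⟨hx.1.le, hx.2⟩) (sq_nonneg _))
    by_contra hne
    push Not at hne
    have hv0 : ∀ x ∈ Ioo 0 d, v x = 0 := by
      intro x hx
      by_contra hvx
      have h1 := hne x (Ioo_subset_Icc_self hx)
      have h2 : 0 < h x * v x ^ 2 := mul_pos (hpos x hx) (by positivity)
      linarith
    -- If `φ' = 0`, the equation forces `φ = 0` inside, since `μ > 0`; but `φ 0 = -1`.
    have hφ0' : ∀ x ∈ Ioo 0 d, φ x = 0 := by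
      intro x hx
      have h1 : HasDerivAt (fun t => h t * v t) 0 x :=
        (hasDerivAt_const x (0:ℝ)).congr_of_eventuallyEq
          (Filter.eventuallyEq_of_mem (hopen.mem_nhds hx) (fun t ht => by simp [hv0 t ht]))
      have h2 := (hode x hx).unique h1
      simpa [hμ0.ne', (hpos x hx).ne'] using h2
    have hcl : ∀ x ∈ closure (Ioo 0 d), φ x = 0 := by
      have hIcc := closure_Ioo hd0.ne
      have : EqOn φ (fun _ => 0) (closure (Ioo 0 d)) :=
        EqOn.of_subset_closure (s := Ioo 0 d) hφ0' (by rwa [hIcc]) continuousOn_const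
          subset_closure le_rfl
      exact this
    rw [closure_Ioo hd0.ne] at hcl
    have := hcl 0 ⟨le_rfl, hd0.le⟩
    rw [hφ0] at this
    norm_num at this
  have hfin : 3 / 4 * (∫ x in (0:ℝ)..d, deriv h x ^ 2 / h x * v x ^ 2) /
      (∫ x in (0:ℝ)..d, h x * v x ^ 2) ≤ μ - π ^ 2 / d ^ 2 := by
    rw [div_le_iff₀ hDpos]; linarith
  linarith
end
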